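/- Let a ≥ b ≥ k ≥ 1 with n ≥ a+b. Then the cokernel of ψ_k: Λ^a⊗Λ^b → Λ^a⊗Λ^b is isomorphic as a G-module to the Schur module L_{(a,b)} if and only if Σ_{t=1}^{j} (−1)^{t−1} C(b−t,b−k) C(j,t) C(a−b+j+t,t) ≠ 0 for all j = 1,…,b. -/

import Mathlib

open TensorProduct

set_option synthInstance.maxHeartbeats 1000000
set_option maxSynthPendingDepth 3
set_option maxHeartbeats 1000000

noncomputable section

namespace MMS

variable (K : Type) [Field K] [CharZero K] (n : ℕ)

/-- `V = K^n`, the natural module of `G = GL(n,K)`. -/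
abbrev V : Type := Fin n → K

/-- `Λ^p`, the `p`-th exterior power of `V`. -/
abbrev Lam (p : ℕ) : Type := ⋀[K]^p (V K n)

/-- The wedge `v_1 ∧ ⋯ ∧ v_p ∈ Λ^p`. -/
def wedge {p : ℕ} (v : Fin p → V K n) : Lam K n p :=
  ⟨ExteriorAlgebra.ιMulti K p v, ExteriorAlgebra.ιMulti_range K p (Set.mem_range_self v)⟩

/-- Transport along an equality of degrees. -/
def ecast {p q : ℕ} (h : p = q) : Lam K n p ≃ₗ[K] Lam K n q :=
  h ▸ LinearEquiv.refl K (Lam K n p)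

/-- `m` is the wedge multiplication map `Λ^p ⊗ Λ^q → Λ^{p+q}`. -/
def IsMulMap (p q : ℕ) (m : Lam K n p ⊗[K] Lam K n q →ₗ[K] Lam K n (p+q)) : Prop :=
  ∀ (v : Fin p → V K n) (w : Fin q → V K n),
    m (wedge K n v ⊗ₜ[K] wedge K n w) = wedge K n (Fin.append v w)

/-- The set of `(p,q)`-shuffles: permutations `σ` of `{1, …, p+q}` which are strictly
increasing on the first `p` and on the last `q` indices. -/
def shuffles (p q : ℕ) : Finset (Equiv.Perm (Fin (p+q))) :=
  Finset.univ.filter (fun σ =>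
    (∀ i j : Fin (p+q), i < j → (j : ℕ) < p → σ i < σ j) ∧
    (∀ i j : Fin (p+q), i < j → p ≤ (i : ℕ) → σ i < σ j))

/-- `D` is the component `Δ_{p,q} : Λ^{p+q} → Λ^p ⊗ Λ^q` of the comultiplication, i.e.
`Δ_{p,q}(v_1 ∧ ⋯ ∧ v_{p+q}) = Σ_σ sgn(σ) (v_{σ(1)} ∧ ⋯ ∧ v_{σ(p)}) ⊗ (v_{σ(p+1)} ∧ ⋯ ∧ v_{σ(p+q)})`,
the sum being over all `(p,q)`-shuffles. -/
def IsComulMap (p q : ℕ) (D : Lam K n (p+q) →ₗ[K] Lam K n p ⊗[K] Lam K n q) : Prop :=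
  ∀ v : Fin (p+q) → V K n,
    D (wedge K n v) =
      ∑ σ ∈ shuffles p q,
        (Equiv.Perm.sign σ : ℤ) •
          (wedge K n (fun i => v (σ (Fin.castAdd q i))) ⊗ₜ[K]
            wedge K n (fun i => v (σ (Fin.natAdd p i))))

variable (mf : ∀ p q : ℕ, Lam K n p ⊗[K] Lam K n q →ₗ[K] Lam K n (p+q))
variable (Df : ∀ p q : ℕ, Lam K n (p+q) →ₗ[K] Lam K n p ⊗[K] Lam K n q)

/-- The map `δ_t = (m ⊗ 1) ∘ (1 ⊗ Δ_{t,b-t}) : Λ^a ⊗ Λ^b → Λ^{a+t} ⊗ Λ^{b-t}`. -/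
def deltaMap (a b t : ℕ) (ht : t ≤ b) :
    Lam K n a ⊗[K] Lam K n b →ₗ[K] Lam K n (a+t) ⊗[K] Lam K n (b-t) :=
  (TensorProduct.map (mf a t) LinearMap.id)
    ∘ₗ (TensorProduct.assoc K (Lam K n a) (Lam K n t) (Lam K n (b-t))).symm.toLinearMap
    ∘ₗ (TensorProduct.map LinearMap.id
        ((Df t (b-t)) ∘ₗ (ecast K n (by omega : b = t + (b-t))).toLinearMap))

/-- The map `θ_t = (1 ⊗ m) ∘ (Δ_{a-t,t} ⊗ 1) : Λ^a ⊗ Λ^b → Λ^{a-t} ⊗ Λ^{b+t}`. -/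
def thetaMap (a b t : ℕ) (ht : t ≤ a) :
    Lam K n a ⊗[K] Lam K n b →ₗ[K] Lam K n (a-t) ⊗[K] Lam K n (b+t) :=
  (TensorProduct.map LinearMap.id
      ((ecast K n (by omega : t + b = b + t)).toLinearMap ∘ₗ mf t b))
    ∘ₗ (TensorProduct.assoc K (Lam K n (a-t)) (Lam K n t) (Lam K n b)).toLinearMap
    ∘ₗ (TensorProduct.map
        ((Df (a-t) t) ∘ₗ (ecast K n (by omega : a = (a-t) + t)).toLinearMap) LinearMap.id)

/-- The map `Φ_t = θ_t ∘ δ_t : Λ^a ⊗ Λ^b → Λ^a ⊗ Λ^b`. -/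
def PhiMap (a b t : ℕ) (hta : t ≤ a) (htb : t ≤ b) :
    Lam K n a ⊗[K] Lam K n b →ₗ[K] Lam K n a ⊗[K] Lam K n b :=
  (TensorProduct.congr (ecast K n (by omega : a + t - t = a))
      (ecast K n (by omega : b - t + t = b))).toLinearMap
    ∘ₗ thetaMap K n mf Df (a+t) (b-t) t (by omega)
    ∘ₗ deltaMap K n mf Df a b t htb

/-- The map `Φ_t`, extended by `0` to all `t`. -/
def PhiMap' (a b t : ℕ) :
    Lam K n a ⊗[K] Lam K n b →ₗ[K] Lam K n a ⊗[K] Lam K n b :=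
  if h : t ≤ a ∧ t ≤ b then PhiMap K n mf Df a b t h.1 h.2 else 0

/-- The map `θ_1 : Λ^{a+1} ⊗ Λ^{b-1} → Λ^a ⊗ Λ^b` (for `b ≥ 1`). -/
def theta1 (a b : ℕ) (hb : 1 ≤ b) :
    Lam K n (a+1) ⊗[K] Lam K n (b-1) →ₗ[K] Lam K n a ⊗[K] Lam K n b :=
  (TensorProduct.congr (ecast K n (by omega : a + 1 - 1 = a))
      (ecast K n (by omega : b - 1 + 1 = b))).toLinearMap
    ∘ₗ thetaMap K n mf Df (a+1) (b-1) 1 (by omega)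

/-- The submodule of relations defining the Schur module `L_{(a,b)}`: the image of
`θ_1` if `b ≥ 1`, and `0` if `b = 0`. -/
def schurRel (a b : ℕ) : Submodule K (Lam K n a ⊗[K] Lam K n b) :=
  if hb : 1 ≤ b then LinearMap.range (theta1 K n mf Df a b hb) else ⊥

/-- The Schur module `L_{(a,b)}`, realized as the cokernel of `θ_1` (in characteristic zero). -/
abbrev SchurL (a b : ℕ) : Type :=
  (Lam K n a ⊗[K] Lam K n b) ⧸ schurRel K n mf Df a b

/-- The projection `π_{(a,b)} : Λ^a ⊗ Λ^b → L_{(a,b)}`. -/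
def schurProj (a b : ℕ) : Lam K n a ⊗[K] Lam K n b →ₗ[K] SchurL K n mf Df a b :=
  (schurRel K n mf Df a b).mkQ

/-- The coefficient `c_t(a,b,i) = C(i,t)·C(a-b+t+i,t)`. -/
def cCoef (a b t i : ℕ) : ℕ := (i.choose t) * ((a-b+t+i).choose t)

/-- The group `G = GL(n,K)`. -/
abbrev GLn : Type := Matrix.GeneralLinearGroup (Fin n) K

/-- `rho` is the family of natural actions of `G = GL(n,K)` on the exterior powers `Λ^p`
of the natural module `V = K^n`. -/
def IsExtAction (rho : ∀ p : ℕ, GLn K n → (Lam K n p →ₗ[K] Lam K n p)) : Prop :=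
  ∀ (p : ℕ) (g : GLn K n) (v : Fin p → V K n),
    rho p g (wedge K n v) =
      wedge K n (fun i => Matrix.toLin' (g : Matrix (Fin n) (Fin n) K) (v i))

/-- The action of `g ∈ GL(n,K)` on `Λ^a ⊗ Λ^b`. -/
def rhoT (rho : ∀ p : ℕ, GLn K n → (Lam K n p →ₗ[K] Lam K n p)) (a b : ℕ) (g : GLn K n) :
    Lam K n a ⊗[K] Lam K n b →ₗ[K] Lam K n a ⊗[K] Lam K n b :=
  TensorProduct.map (rho a g) (rho b g)

/-- The quotients `M₁ ⧸ N₁` and `M₂ ⧸ N₂` are isomorphic as representations, with respect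
to the given actions `ρ₁, ρ₂` on `M₁` and `M₂` (which descend to the quotients). -/
def IsQuotIso {G' : Type} {M₁ M₂ : Type} [AddCommGroup M₁] [Module K M₁]
    [AddCommGroup M₂] [Module K M₂]
    (N₁ : Submodule K M₁) (N₂ : Submodule K M₂)
    (ρ₁ : G' → M₁ →ₗ[K] M₁) (ρ₂ : G' → M₂ →ₗ[K] M₂) : Prop :=
  ∃ e : (M₁ ⧸ N₁) ≃ₗ[K] (M₂ ⧸ N₂),
    ∀ (g : G') (x : M₁) (y : M₂),
      e (Submodule.Quotient.mk x) = Submodule.Quotient.mk y →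
      e (Submodule.Quotient.mk (ρ₁ g x)) = Submodule.Quotient.mk (ρ₂ g y)

/-- The "multiply in pairs" map
`(Λ^{p₁} ⊗ Λ^{q₁}) ⊗ (Λ^{p₂} ⊗ Λ^{q₂}) → Λ^{p₁+p₂} ⊗ Λ^{q₁+q₂}`. -/
def pairMul (p₁ q₁ p₂ q₂ : ℕ) :
    (Lam K n p₁ ⊗[K] Lam K n q₁) ⊗[K] (Lam K n p₂ ⊗[K] Lam K n q₂) →ₗ[K]
      Lam K n (p₁+p₂) ⊗[K] Lam K n (q₁+q₂) :=
  (TensorProduct.map (mf p₁ p₂) (mf q₁ q₂))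
    ∘ₗ (TensorProduct.tensorTensorTensorComm K (Lam K n p₁) (Lam K n q₁)
        (Lam K n p₂) (Lam K n q₂)).toLinearMap

/-- The map `φ_k = (m ⊗ m) ∘ (1 ⊗ τ ⊗ 1) ∘ (Δ_{a-k,k} ⊗ Δ_{k,b-k}) : Λ^a ⊗ Λ^b → Λ^a ⊗ Λ^b`. -/
def phiSmall (a b k : ℕ) (hka : k ≤ a) (hkb : k ≤ b) :
    Lam K n a ⊗[K] Lam K n b →ₗ[K] Lam K n a ⊗[K] Lam K n b :=
  (TensorProduct.congr (ecast K n (by omega : (a-k) + k = a))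
      (ecast K n (by omega : k + (b-k) = b))).toLinearMap
    ∘ₗ pairMul K n mf (a-k) k k (b-k)
    ∘ₗ (TensorProduct.map
        ((Df (a-k) k) ∘ₗ (ecast K n (by omega : a = (a-k) + k)).toLinearMap)
        ((Df k (b-k)) ∘ₗ (ecast K n (by omega : b = k + (b-k))).toLinearMap))

/-- The map `ψ_k = C(b,k)·1 - φ_k : Λ^a ⊗ Λ^b → Λ^a ⊗ Λ^b`. -/
def psiSmall (a b k : ℕ) (hka : k ≤ a) (hkb : k ≤ b) :
    Lam K n a ⊗[K] Lam K n b →ₗ[K] Lam K n a ⊗[K] Lam K n b :=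
  (Nat.choose b k : K) • LinearMap.id - phiSmall K n mf Df a b k hka hkb

/-- The map `β_k = (m ⊗ m) ∘ (1 ⊗ τ ⊗ 1) ∘ (Δ_{a-k,k} ⊗ 1 ⊗ 1) : Λ^a ⊗ (Λ^k ⊗ Λ^{b-k}) → Λ^a ⊗ Λ^b`. -/
def betaMap (a b k : ℕ) (hka : k ≤ a) (hkb : k ≤ b) :
    Lam K n a ⊗[K] (Lam K n k ⊗[K] Lam K n (b-k)) →ₗ[K] Lam K n a ⊗[K] Lam K n b :=
  (TensorProduct.congr (ecast K n (by omega : (a-k) + k = a))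
      (ecast K n (by omega : k + (b-k) = b))).toLinearMap
    ∘ₗ pairMul K n mf (a-k) k k (b-k)
    ∘ₗ (TensorProduct.map
        ((Df (a-k) k) ∘ₗ (ecast K n (by omega : a = (a-k) + k)).toLinearMap)
        LinearMap.id)

/-- The map `γ_k : Λ^a ⊗ (Λ^k ⊗ Λ^{b-k}) → Λ^a ⊗ Λ^b`,
`γ_k(x ⊗ y ⊗ z) = x ⊗ (y ∧ z) - β_k(x ⊗ y ⊗ z)`. -/
def gammaMap (a b k : ℕ) (hka : k ≤ a) (hkb : k ≤ b) :
    Lam K n a ⊗[K] (Lam K n k ⊗[K] Lam K n (b-k)) →ₗ[K] Lam K n a ⊗[K] Lam K n b :=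
  (TensorProduct.map LinearMap.id
      ((ecast K n (by omega : k + (b-k) = b)).toLinearMap ∘ₗ mf k (b-k)))
    - betaMap K n mf Df a b k hka hkb

/-- The quantity `d_k(a,b,t)` (for the given `i`), from Lemma 5.3 of the paper. -/
def dInt (a b k i t : ℕ) : ℤ :=
  1 - ∑ j ∈ Finset.Icc (i - min (b-k) i) t,
        (-1:ℤ)^j * ((a-k+j).choose (a-k) : ℤ) * ((b-k+t-i).choose (t-j) : ℤ)

end MMS

namespace MMS

section DividedPower

variable {K : Type} [Field K] {B : Type} [AddCommGroup B] [Module K B]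

/-- The divided power `T^t / t!` of an endomorphism. -/
def divPow (T : Module.End K B) (t : ℕ) : Module.End K B := (t.factorial : K)⁻¹ • T ^ t

lemma divPow_zero (T : Module.End K B) : divPow T 0 = 1 := by simp [divPow]

lemma divPow_one (T : Module.End K B) : divPow T 1 = T := by simp [divPow]

variable [CharZero K]

lemma mul_divPow (T : Module.End K B) (t : ℕ) :
    T * divPow T t = ((t : K) + 1) • divPow T (t + 1) := by
  have h : (t.factorial : K) ≠ 0 := by exact_mod_cast t.factorial_ne_zero
  have h' : (t : K) + 1 ≠ 0 := by exact_mod_cast t.succ_ne_zero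
  rw [divPow, divPow, smul_smul, mul_smul_comm, ← pow_succ', Nat.factorial_succ]
  congr 1
  push_cast
  field_simp

lemma divPow_mul (T : Module.End K B) (t : ℕ) :
    divPow T t * T = ((t : K) + 1) • divPow T (t + 1) := by
  rw [← mul_divPow, divPow, smul_mul_assoc, mul_smul_comm, ← pow_succ, ← pow_succ']

lemma divPow_succ (T : Module.End K B) (t : ℕ) :
    divPow T (t + 1) = ((t : K) + 1)⁻¹ • (T * divPow T t) := by
  have h' : (t : K) + 1 ≠ 0 := by exact_mod_cast t.succ_ne_zero
  rw [mul_divPow, smul_smul, inv_mul_cancel₀ h', one_smul]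

lemma divPow_succ' (T : Module.End K B) (t : ℕ) :
    divPow T (t + 1) = ((t : K) + 1)⁻¹ • (divPow T t * T) := by
  rw [divPow_mul, ← mul_divPow, ← divPow_succ]

lemma divPow_succ_apply_of_apply_eq_zero {T : Module.End K B} {v : B} (h : T v = 0) (t : ℕ) :
    divPow T (t + 1) v = 0 := by
  simp [divPow_succ', h]

lemma divPow_mul_divPow (T : Module.End K B) (s t : ℕ) :
    divPow T s * divPow T t = ((s + t).choose s : K) • divPow T (s + t) := by
  have h1 : (s.factorial : K) ≠ 0 := by exact_mod_cast s.factorial_ne_zero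
  have h2 : (t.factorial : K) ≠ 0 := by exact_mod_cast t.factorial_ne_zero
  have h3 : ((s + t).factorial : K) ≠ 0 := by exact_mod_cast (s + t).factorial_ne_zero
  rw [divPow, divPow, divPow, smul_mul_assoc, mul_smul_comm, smul_smul, smul_smul, ← pow_add,
    Nat.cast_add_choose]
  congr 1
  field_simp

end DividedPower

section Sl2

variable {K : Type} [Field K] {B : Type} [AddCommGroup B] [Module K B]

/-- The commutation relations of the standard basis of `sl₂`. -/
structure Sl2Relations (E F H : Module.End K B) : Prop where
  lie_h_e : H * E - E * H = (2 : K) • E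
  lie_h_f : H * F - F * H = -(2 : K) • F
  lie_e_f : E * F - F * E = H

lemma Sl2Relations.swap {E F H : Module.End K B} (h : Sl2Relations E F H) :
    Sl2Relations F E (-H) where
  lie_h_e := by rw [neg_mul, mul_neg, ← neg_sub', h.lie_h_f, neg_smul, neg_neg]
  lie_h_f := by rw [neg_mul, mul_neg, ← neg_sub', h.lie_h_e, neg_smul]
  lie_e_f := by rw [← h.lie_e_f, neg_sub]

variable {E F H : Module.End K B} {v : B}

lemma Sl2Relations.h_pow_f (h : Sl2Relations E F H) {μ : K} (hv : H v = μ • v) (j : ℕ) :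
    H ((F ^ j) v) = (μ - 2 * j) • (F ^ j) v := by
  induction j with
  | zero => simp [hv]
  | succ j ih =>
    have := congrArg (fun T : Module.End K B => T ((F ^ j) v)) h.lie_h_f
    simp only [LinearMap.sub_apply, Module.End.mul_apply, LinearMap.smul_apply, ih,
      map_smul] at this
    rw [pow_succ', Module.End.mul_apply, eq_add_of_sub_eq this]
    push_cast
    module

lemma Sl2Relations.e_pow_f (h : Sl2Relations E F H) {μ : K} (hv : H v = μ • v) (he : E v = 0)
    (j : ℕ) : E ((F ^ (j + 1)) v) = ((j + 1) * (μ - j)) • (F ^ j) v := by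
  have key (w : B) : E (F w) = F (E w) + H w := by
    have := congrArg (fun T : Module.End K B => T w) h.lie_e_f
    simp only [LinearMap.sub_apply, Module.End.mul_apply] at this
    rw [← this]; abel
  induction j with
  | zero => simp [key, he, hv]
  | succ j ih =>
    rw [pow_succ', Module.End.mul_apply, key, ih, h.h_pow_f hv, map_smul,
      ← Module.End.mul_apply, ← pow_succ']
    push_cast
    module

variable [CharZero K]

lemma Sl2Relations.e_divPow_f (h : Sl2Relations E F H) {μ : K} (hv : H v = μ • v)
    (he : E v = 0) (j : ℕ) : E (divPow F (j + 1) v) = (μ - j) • divPow F j v := by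
  have h1 : (j.factorial : K) ≠ 0 := by exact_mod_cast j.factorial_ne_zero
  have h' : (j : K) + 1 ≠ 0 := by exact_mod_cast j.succ_ne_zero
  rw [divPow, divPow, LinearMap.smul_apply, LinearMap.smul_apply, map_smul, h.e_pow_f hv he,
    smul_smul, smul_smul, Nat.factorial_succ]
  congr 1
  push_cast
  field_simp

lemma Sl2Relations.divPow_e_divPow_f (h : Sl2Relations E F H) {m : ℕ} (hv : H v = (m : K) • v)
    (he : E v = 0) (t i : ℕ) (hti : t + i ≤ m) :
    divPow E t (divPow F (t + i) v) = ((m - i).choose t : K) • divPow F i v := by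
  induction t generalizing i with
  | zero => simp [divPow_zero]
  | succ t ih =>
    have h' : (t : K) + 1 ≠ 0 := by exact_mod_cast t.succ_ne_zero
    obtain ⟨d, rfl⟩ : ∃ d, m = d + i + 1 := ⟨m - i - 1, by omega⟩
    rw [add_right_comm, add_assoc, divPow_succ, LinearMap.smul_apply, Module.End.mul_apply,
      ih (i + 1) (by omega), map_smul, h.e_divPow_f hv he, smul_smul, smul_smul]
    congr 1
    rw [show d + i + 1 - (i + 1) = d by omega, show d + i + 1 - i = d + 1 by omega]
    have := Nat.add_one_mul_choose_eq d t
    have : ((d : K) + 1) * (d.choose t) = ((d + 1).choose (t + 1)) * (t + 1) := by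
      exact_mod_cast this
    push_cast
    field_simp
    linear_combination this

lemma Sl2Relations.divPow_f_divPow_e_divPow_f (h : Sl2Relations E F H) {m j : ℕ}
    (hv : H v = (m : K) • v) (he : E v = 0) (hjm : j ≤ m) (t : ℕ) :
    divPow F t (divPow E t (divPow F j v)) =
      ((j.choose t : K) * ((m - j + t).choose t : K)) • divPow F j v := by
  rcases le_or_gt t j with htj | htj
  · obtain ⟨i, rfl⟩ := Nat.exists_eq_add_of_le htj
    rw [h.divPow_e_divPow_f hv he t i hjm, map_smul, ← Module.End.mul_apply, divPow_mul_divPow,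
      LinearMap.smul_apply, smul_smul, mul_comm, show m - (t + i) + t = m - i by omega]
  · obtain ⟨d, rfl⟩ := Nat.exists_eq_add_of_lt htj
    have h0 := h.divPow_e_divPow_f hv he j 0 (by omega)
    rw [add_zero] at h0
    have h1 : (divPow E (d + 1) * divPow E j) (divPow F j v) = 0 := by
      rw [Module.End.mul_apply, h0, divPow_zero, map_smul, Module.End.one_apply,
        divPow_succ_apply_of_apply_eq_zero he, smul_zero]
    have h2 : divPow E (j + d + 1) (divPow F j v) = 0 := by
      rw [divPow_mul_divPow, LinearMap.smul_apply, smul_eq_zero,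
        show d + 1 + j = j + d + 1 by omega] at h1
      refine h1.resolve_left ?_
      exact_mod_cast (Nat.choose_pos (by omega)).ne'
    rw [h2, map_zero, Nat.choose_eq_zero_of_lt (by omega)]
    simp

end Sl2

section Inversion

lemma sum_choose_mul_inverse {K : Type} [Field K] {B : Type} [AddCommGroup B] [Module K B]
    {b : ℕ} (R P : ℕ → B)
    (hP : ∀ t ≤ b, P t = ∑ i ∈ Finset.range (t + 1), ((b - i).choose (t - i) : K) • R i)
    (k : ℕ) (hk : k ≤ b) :
    ∑ t ∈ Finset.range (k + 1), ((-1 : K) ^ t * ((b - t).choose (k - t) : K)) • P t =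
      (-1 : K) ^ k • R k := by
  have h1 : ∀ t ∈ Finset.range (k + 1),
      ((-1 : K) ^ t * ((b - t).choose (k - t) : K)) • P t =
      ∑ i ∈ Finset.range (t + 1), ((-1 : K) ^ t * ((b - t).choose (k - t) : K) *
        ((b - i).choose (t - i) : K)) • R i := by
    intro t ht
    rw [hP t (by have := Finset.mem_range.1 ht; omega), Finset.smul_sum]
    simp only [smul_smul]
  have coeff (t i : ℕ) (hit : i ≤ t) (htk : t ≤ k) :
      (-1 : K) ^ t * ((b - t).choose (k - t) : K) * ((b - i).choose (t - i) : K) =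
      (-1 : K) ^ (i + (t - i)) * ((b - i).choose (k - i) : K) * ((k - i).choose (t - i) : K) := by
    obtain ⟨d, rfl⟩ := Nat.exists_eq_add_of_le hit
    obtain ⟨c, rfl⟩ := Nat.exists_eq_add_of_le htk
    rw [show i + d + c - (i + d) = c by omega, show i + d - i = d by omega,
      show i + d + c - i = d + c by omega]
    have := Nat.choose_mul (n := b - i) (k := d + c) (s := d) (by omega)
    rw [show b - i - d = b - (i + d) by omega, show d + c - d = c by omega] at this
    have : ((b - i).choose (d + c) : K) * ((d + c).choose d : K) =
        (b - i).choose d * (b - (i + d)).choose c := by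
      rw [← Nat.cast_mul, this, Nat.cast_mul]
    linear_combination (-1 : K) ^ (i + d) * (-this)
  rw [Finset.sum_congr rfl h1, Finset.sum_sigma', 
    Finset.sum_bij' (t := (Finset.range (k + 1)).sigma fun i => Finset.range (k - i + 1))
      (g := fun p => ((-1 : K) ^ (p.1 + p.2) * ((b - p.1).choose (k - p.1) : K) *
        ((k - p.1).choose p.2 : K)) • R p.1)
      (fun p _ => ⟨p.2, p.1 - p.2⟩) (fun p _ => ⟨p.1 + p.2, p.1⟩)]
  · rw [Finset.sum_sigma, Finset.sum_eq_single k]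
    · simp
    · intro i hi hik
      have hik' : i < k := by have := Finset.mem_range.1 hi; omega
      have h := Int.alternating_sum_range_choose_of_ne (n := k - i) (by omega)
      have h' : ∑ d ∈ Finset.range (k - i + 1), (-1 : K) ^ d * ((k - i).choose d : K) = 0 := by
        exact_mod_cast congrArg (Int.cast : ℤ → K) h
      simp only [pow_add]
      rw [← Finset.sum_smul, ← Finset.sum_congr rfl fun d _ => show
        (-1 : K) ^ i * ((b - i).choose (k - i) : K) * ((-1 : K) ^ d * ((k - i).choose d : K)) = _
          by ring, ← Finset.mul_sum, h', mul_zero, zero_smul]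
    · simp
  · rintro ⟨t, i⟩ h
    simp only [Finset.mem_sigma, Finset.mem_range] at h ⊢
    omega
  · rintro ⟨i, d⟩ h
    simp only [Finset.mem_sigma, Finset.mem_range] at h ⊢
    omega
  · rintro ⟨t, i⟩ h
    simp only [Finset.mem_sigma, Finset.mem_range] at h
    have : i + (t - i) = t := by omega
    simp [this]
  · rintro ⟨i, d⟩ h
    simp
  · rintro ⟨t, i⟩ h
    simp only [Finset.mem_sigma, Finset.mem_range] at h
    simp only [coeff t i (by omega) (by omega)]

end Inversion

section ExteriorDerivation

variable {K : Type} [Field K] {M : Type} [AddCommGroup M] [Module K M]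

open Polynomial in
/-- The algebra map `Λ M → (Λ M)[X]` extending `m ↦ m + X f(m)`. -/
def expHom (f : M →ₗ[K] M) : ExteriorAlgebra K M →ₐ[K] (ExteriorAlgebra K M)[X] :=
  ExteriorAlgebra.lift K
    ⟨((monomial 0).restrictScalars K) ∘ₗ ExteriorAlgebra.ι K +
      ((monomial 1).restrictScalars K) ∘ₗ ExteriorAlgebra.ι K ∘ₗ f, fun m => by
      simp only [LinearMap.add_apply, LinearMap.comp_apply, LinearMap.coe_restrictScalars,
        add_mul, mul_add, monomial_mul_monomial, ExteriorAlgebra.ι_sq_zero, map_zero, zero_add,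
        add_zero]
      rw [← map_add, ExteriorAlgebra.ι_add_mul_swap, map_zero]⟩

open Polynomial in
lemma expHom_ι (f : M →ₗ[K] M) (m : M) :
    expHom f (ExteriorAlgebra.ι K m) =
      monomial 0 (ExteriorAlgebra.ι K m) + monomial 1 (ExteriorAlgebra.ι K (f m)) := by
  rw [expHom, ExteriorAlgebra.lift_ι_apply]
  rfl

/-- The coefficients of `expHom f`. -/
def expCoeff (f : M →ₗ[K] M) (t : ℕ) : Module.End K (ExteriorAlgebra K M) :=
  ((Polynomial.lcoeff _ t).restrictScalars K) ∘ₗ (expHom f).toLinearMap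

lemma expCoeff_apply (f : M →ₗ[K] M) (t : ℕ) (x : ExteriorAlgebra K M) :
    expCoeff f t x = (expHom f x).coeff t := rfl

/-- The derivation of `Λ M` extending the endomorphism `f` of `M`. -/
abbrev extDer (f : M →ₗ[K] M) : Module.End K (ExteriorAlgebra K M) := expCoeff f 1

lemma expCoeff_mul (f : M →ₗ[K] M) (t : ℕ) (x y : ExteriorAlgebra K M) :
    expCoeff f t (x * y) =
      ∑ p ∈ Finset.HasAntidiagonal.antidiagonal t, expCoeff f p.1 x * expCoeff f p.2 y := by
  simp only [expCoeff_apply, map_mul, Polynomial.coeff_mul]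

lemma expCoeff_algebraMap (f : M →ₗ[K] M) (t : ℕ) (r : K) :
    expCoeff f t (algebraMap K _ r) = if t = 0 then algebraMap K _ r else 0 := by
  rw [expCoeff_apply, AlgHom.commutes, Polynomial.algebraMap_apply, Polynomial.coeff_C]

lemma expCoeff_ι (f : M →ₗ[K] M) (t : ℕ) (m : M) :
    expCoeff f t (ExteriorAlgebra.ι K m) =
      (if 0 = t then ExteriorAlgebra.ι K m else 0) +
        (if 1 = t then ExteriorAlgebra.ι K (f m) else 0) := by
  rw [expCoeff_apply, expHom_ι, Polynomial.coeff_add, Polynomial.coeff_monomial,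
    Polynomial.coeff_monomial]

lemma expCoeff_zero (f : M →ₗ[K] M) (x : ExteriorAlgebra K M) : expCoeff f 0 x = x := by
  induction x using ExteriorAlgebra.induction with
  | algebraMap r => simp [expCoeff_algebraMap]
  | ι m => simp [expCoeff_ι]
  | mul x y hx hy => simp [expCoeff_mul, hx, hy]
  | add x y hx hy => rw [map_add, hx, hy]

lemma extDer_mul (f : M →ₗ[K] M) (x y : ExteriorAlgebra K M) :
    extDer f (x * y) = extDer f x * y + x * extDer f y := by
  rw [expCoeff_mul, Finset.Nat.antidiagonal_succ]
  simp [expCoeff_zero, add_comm]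

lemma extDer_ι (f : M →ₗ[K] M) (m : M) :
    extDer f (ExteriorAlgebra.ι K m) = ExteriorAlgebra.ι K (f m) := by
  simp [expCoeff_ι]

lemma extDer_algebraMap (f : M →ₗ[K] M) (r : K) : extDer f (algebraMap K _ r) = 0 := by
  simp [expCoeff_algebraMap]

lemma extDer_bracket (f g h : M →ₗ[K] M) (hfg : ∀ m, f (g m) - g (f m) = h m) :
    extDer f * extDer g - extDer g * extDer f = extDer h := by
  refine LinearMap.ext fun x => ?_
  rw [LinearMap.sub_apply, Module.End.mul_apply, Module.End.mul_apply]
  induction x using ExteriorAlgebra.induction with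
  | algebraMap r => simp [extDer_algebraMap]
  | ι m => simp only [extDer_ι, ← hfg, map_sub]
  | mul x y hx hy =>
    simp only [extDer_mul, map_add, ← hx, ← hy, sub_mul, mul_sub]
    abel
  | add x y hx hy =>
    simp only [map_add, ← hx, ← hy]
    abel

lemma extDer_smul (c : K) (f : M →ₗ[K] M) : extDer (c • f) = c • extDer f := by
  refine LinearMap.ext fun x => ?_
  rw [LinearMap.smul_apply]
  induction x using ExteriorAlgebra.induction with
  | algebraMap r => simp [extDer_algebraMap]
  | ι m => simp [extDer_ι]
  | mul x y hx hy => simp [extDer_mul, hx, hy]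
  | add x y hx hy => simp only [map_add, hx, hy, smul_add]

lemma extDer_ιMulti_of_eigen (f : M →ₗ[K] M) (c : K) {p : ℕ} (v : Fin p → M)
    (hv : ∀ i, f (v i) = c • v i) :
    extDer f (ExteriorAlgebra.ιMulti K p v) = (p * c) • ExteriorAlgebra.ιMulti K p v := by
  induction p with
  | zero =>
    rw [ExteriorAlgebra.ιMulti_zero_apply, ← map_one (algebraMap K _), extDer_algebraMap]
    simp
  | succ p ih =>
    rw [ExteriorAlgebra.ιMulti_succ_apply, extDer_mul, extDer_ι, hv, ih (Matrix.vecTail v) fun i => hv i.succ,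
      map_smul, mul_smul_comm, smul_mul_assoc]
    push_cast
    module

lemma extDer_map {N : Type} [AddCommGroup N] [Module K N] (f : M →ₗ[K] M) (g : N →ₗ[K] N)
    (l : M →ₗ[K] N) (hl : ∀ m, g (l m) = l (f m)) (x : ExteriorAlgebra K M) :
    extDer g (ExteriorAlgebra.map l x) = ExteriorAlgebra.map l (extDer f x) := by
  induction x using ExteriorAlgebra.induction with
  | algebraMap r => simp [extDer_algebraMap]
  | ι m => simp [extDer_ι, hl]
  | mul x y hx hy => simp [extDer_mul, hx, hy]
  | add x y hx hy => simp only [map_add, hx, hy]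

lemma extDer_mul_expCoeff (f : M →ₗ[K] M) (hf : ∀ m, f (f m) = 0) (t : ℕ)
    (x : ExteriorAlgebra K M) :
    extDer f (expCoeff f t x) = ((t : K) + 1) • expCoeff f (t + 1) x := by
  induction x using ExteriorAlgebra.induction generalizing t with
  | algebraMap r =>
    rw [expCoeff_algebraMap, expCoeff_algebraMap]
    split_ifs <;> simp_all [extDer_algebraMap]
  | ι m =>
    rw [expCoeff_ι, expCoeff_ι]
    rcases t with _ | _ | t <;> simp [extDer_ι, hf]
  | mul x y hx hy =>
    rw [expCoeff_mul, expCoeff_mul, map_sum, Finset.smul_sum]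
    simp only [extDer_mul, hx, hy, Finset.sum_add_distrib]
    have h1 : ∀ p ∈ Finset.HasAntidiagonal.antidiagonal (t + 1),
        ((t : K) + 1) • (expCoeff f p.1 x * expCoeff f p.2 y) =
        (p.1 : K) • (expCoeff f p.1 x * expCoeff f p.2 y) +
          (p.2 : K) • (expCoeff f p.1 x * expCoeff f p.2 y) := by
      intro p hp
      rw [← add_smul]
      have := Finset.HasAntidiagonal.mem_antidiagonal.1 hp
      congr 1
      exact_mod_cast congrArg (Nat.cast : ℕ → K) this.symm
    rw [Finset.sum_congr rfl h1, Finset.sum_add_distrib, Finset.Nat.sum_antidiagonal_succ,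
      Finset.Nat.sum_antidiagonal_succ']
    simp
  | add x y hx hy => simp only [map_add, hx, hy, smul_add]

lemma expCoeff_eq_divPow [CharZero K] (f : M →ₗ[K] M) (hf : ∀ m, f (f m) = 0) (t : ℕ) :
    expCoeff f t = divPow (extDer f) t := by
  induction t with
  | zero => refine LinearMap.ext fun x => ?_; simp [divPow_zero, expCoeff_zero]
  | succ t ih =>
    have h' : (t : K) + 1 ≠ 0 := by exact_mod_cast t.succ_ne_zero
    refine LinearMap.ext fun x => ?_
    rw [divPow_succ, LinearMap.smul_apply, Module.End.mul_apply, ← ih, extDer_mul_expCoeff f hf,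
      smul_smul, inv_mul_cancel₀ h', one_smul]

lemma list_ofFn_monomial_prod {A : Type} [Semiring A] {m : ℕ} (e : Fin m → ℕ) (b : Fin m → A) :
    (List.ofFn fun i => Polynomial.monomial (e i) (b i)).prod =
      Polynomial.monomial (∑ i, e i) (List.ofFn b).prod := by
  induction m with
  | zero => simp
  | succ m ih =>
    simp [List.ofFn_succ, Fin.sum_univ_succ, ih, Polynomial.monomial_mul_monomial]

lemma expCoeff_ιMulti (f : M →ₗ[K] M) (t : ℕ) {m : ℕ} (v : Fin m → M) :
    expCoeff f t (ExteriorAlgebra.ιMulti K m v) =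
      ∑ s : Finset (Fin m) with sᶜ.card = t,
        ExteriorAlgebra.ιMulti K m (s.piecewise v fun i => f (v i)) := by
  have h : expHom f (ExteriorAlgebra.ιMulti K m v) = ∑ s : Finset (Fin m),
      Polynomial.monomial sᶜ.card
        (ExteriorAlgebra.ιMulti K m (s.piecewise v fun i => f (v i))) := by
    rw [ExteriorAlgebra.ιMulti_apply, map_list_prod, List.map_ofFn]
    have := (MultilinearMap.mkPiAlgebraFin K m (Polynomial (ExteriorAlgebra K M))).map_add_univ
      (fun i => Polynomial.monomial 0 (ExteriorAlgebra.ι K (v i)))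
      (fun i => Polynomial.monomial 1 (ExteriorAlgebra.ι K (f (v i))))
    rw [MultilinearMap.mkPiAlgebraFin_apply] at this
    convert this using 1
    · congr 2
      ext1 i
      exact expHom_ι f (v i)
    · refine Finset.sum_congr rfl fun s _ => ?_
      rw [MultilinearMap.mkPiAlgebraFin_apply, ExteriorAlgebra.ιMulti_apply]
      have h2 : (s.piecewise (fun i => Polynomial.monomial 0 (ExteriorAlgebra.ι K (v i)))
          (fun i => Polynomial.monomial 1 (ExteriorAlgebra.ι K (f (v i))))) =
          fun i => Polynomial.monomial (if i ∈ s then 0 else 1)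
            (ExteriorAlgebra.ι K (s.piecewise v (fun i => f (v i)) i)) := by
        ext1 i
        by_cases hi : i ∈ s <;> simp [hi]
      rw [h2, list_ofFn_monomial_prod]
      congr 1
      simp [Finset.sum_ite, Finset.card_compl, Finset.filter_not, ← Finset.compl_eq_univ_sdiff]
  rw [expCoeff_apply, h, Polynomial.finsetSum_coeff, Finset.sum_filter]
  simp only [Polynomial.coeff_monomial]

lemma ιMulti_mul_ιMulti_comm {p q : ℕ} (v : Fin p → M) (w : Fin q → M) :
    ExteriorAlgebra.ιMulti K p v * ExteriorAlgebra.ιMulti K q w =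
      (-1 : K) ^ (p * q) • (ExteriorAlgebra.ιMulti K q w * ExteriorAlgebra.ιMulti K p v) := by
  have h1 (x : M) {q : ℕ} (w : Fin q → M) :
      ExteriorAlgebra.ι K x * ExteriorAlgebra.ιMulti K q w =
        (-1 : K) ^ q • (ExteriorAlgebra.ιMulti K q w * ExteriorAlgebra.ι K x) := by
    induction q with
    | zero => simp
    | succ q ih =>
      rw [ExteriorAlgebra.ιMulti_succ_apply, ← mul_assoc,
        eq_neg_of_add_eq_zero_left (ExteriorAlgebra.ι_add_mul_swap x (w 0)), neg_mul, mul_assoc,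
        ih, mul_smul_comm, pow_succ, mul_assoc]
      simp
  induction p with
  | zero => simp
  | succ p ih =>
    rw [ExteriorAlgebra.ιMulti_succ_apply, mul_assoc, ih, mul_smul_comm, ← mul_assoc, h1,
      smul_mul_assoc, smul_smul, mul_assoc, add_mul, one_mul, pow_add]

end ExteriorDerivation

section Embedding

set_option linter.unusedSectionVars false

variable {K : Type} [Field K] [CharZero K] {n : ℕ}

lemma wedge_coe {p : ℕ} (v : Fin p → V K n) :
    (wedge K n v : ExteriorAlgebra K (V K n)) = ExteriorAlgebra.ιMulti K p v := rfl

lemma span_range_wedge (p : ℕ) :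
    Submodule.span K (Set.range (wedge K n : (Fin p → V K n) → Lam K n p)) = ⊤ :=
  exteriorPower.ιMulti_span K p (V K n)

lemma lam_induction {p : ℕ} {P : Lam K n p → Prop} (hw : ∀ v, P (wedge K n v))
    (hadd : ∀ x y, P x → P y → P (x + y)) (hsmul : ∀ (c : K) x, P x → P (c • x))
    (x : Lam K n p) : P x := by
  have hx : x ∈ Submodule.span K (Set.range (wedge K n : (Fin p → V K n) → Lam K n p)) := by
    rw [span_range_wedge]; trivial
  have h0 : P 0 := by simpa using hsmul 0 _ (hw 0)
  induction hx using Submodule.span_induction with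
  | mem x h => obtain ⟨v, rfl⟩ := h; exact hw v
  | zero => exact h0
  | add x y _ _ hx hy => exact hadd x y hx hy
  | smul c x _ hx => exact hsmul c x hx

lemma lam_tensor_induction {p q : ℕ} {P : Lam K n p ⊗[K] Lam K n q → Prop}
    (hw : ∀ v w, P (wedge K n v ⊗ₜ wedge K n w))
    (hadd : ∀ x y, P x → P y → P (x + y)) (hsmul : ∀ (c : K) x, P x → P (c • x))
    (z : Lam K n p ⊗[K] Lam K n q) : P z := by
  have h0 : P 0 := by simpa using hsmul 0 _ (hw 0 0)
  induction z using TensorProduct.induction_on with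
  | zero => exact h0
  | add x y hx hy => exact hadd x y hx hy
  | tmul x y =>
    induction x using lam_induction with
    | hadd x x' hx hx' => rw [TensorProduct.add_tmul]; exact hadd _ _ hx hx'
    | hsmul c x hx => rw [← TensorProduct.smul_tmul']; exact hsmul _ _ hx
    | hw v =>
      induction y using lam_induction with
      | hadd y y' hy hy' => rw [TensorProduct.tmul_add]; exact hadd _ _ hy hy'
      | hsmul c y hy => rw [TensorProduct.tmul_smul]; exact hsmul _ _ hy
      | hw w => exact hw v w

lemma coe_ecast {p q : ℕ} (h : p = q) (x : Lam K n p) :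
    (ecast K n h x : ExteriorAlgebra K (V K n)) = x := by
  subst h; rfl

lemma coe_mul_map {p q : ℕ} {m : Lam K n p ⊗[K] Lam K n q →ₗ[K] Lam K n (p + q)}
    (hm : IsMulMap K n p q m) (x : Lam K n p) (y : Lam K n q) :
    (m (x ⊗ₜ y) : ExteriorAlgebra K (V K n)) = x * y := by
  induction x using lam_induction with
  | hadd x x' hx hx' => simp [TensorProduct.add_tmul, hx, hx', add_mul]
  | hsmul c x hx => rw [← TensorProduct.smul_tmul']; simp [hx]
  | hw v =>
    induction y using lam_induction with
    | hadd y y' hy hy' => simp [TensorProduct.tmul_add, hy, hy', mul_add]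
    | hsmul c y hy => rw [TensorProduct.tmul_smul]; simp [hy]
    | hw w => rw [hm, wedge_coe, wedge_coe, wedge_coe, ExteriorAlgebra.ιMulti_mul_ιMulti]

/-- The embedding of `Λ V` onto the first factor of `Λ (V × V)`. -/
abbrev inlAlg : ExteriorAlgebra K (V K n) →ₐ[K] ExteriorAlgebra K (V K n × V K n) :=
  ExteriorAlgebra.map (LinearMap.inl K _ _)

/-- The embedding of `Λ V` onto the second factor of `Λ (V × V)`. -/
abbrev inrAlg : ExteriorAlgebra K (V K n) →ₐ[K] ExteriorAlgebra K (V K n × V K n) :=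
  ExteriorAlgebra.map (LinearMap.inr K _ _)

/-- The embedding `x ⊗ y ↦ x ∧ y` of `Λ^a V ⊗ Λ^b V` into `Λ (V × V)`, where the two
copies of `V` are the two factors. -/
def jMap (a b : ℕ) : Lam K n a ⊗[K] Lam K n b →ₗ[K] ExteriorAlgebra K (V K n × V K n) :=
  LinearMap.mul' K _ ∘ₗ TensorProduct.map (inlAlg.toLinearMap ∘ₗ Submodule.subtype _)
    (inrAlg.toLinearMap ∘ₗ Submodule.subtype _)

lemma jMap_tmul {a b : ℕ} (x : Lam K n a) (y : Lam K n b) :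
    jMap a b (x ⊗ₜ y) = inlAlg (x : ExteriorAlgebra K (V K n)) * inrAlg y.1 := rfl

lemma jMap_ecast {p p' q q' : ℕ} (h : p = p') (h' : q = q') (z : Lam K n p ⊗[K] Lam K n q) :
    jMap p' q' (TensorProduct.congr (ecast K n h) (ecast K n h') z) = jMap p q z := by
  subst h h'
  have : ∀ p, ecast K n (rfl : p = p) = LinearEquiv.refl K _ := fun _ => rfl
  rw [this, this, TensorProduct.congr_refl_refl]; rfl

open CliffordAlgebra in
lemma jMap_injective (a b : ℕ) : Function.Injective (jMap (K := K) (n := n) a b) := by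
  let Q : QuadraticForm K (V K n) := 0
  have hQ : ∀ m, (0 : QuadraticForm K (V K n × V K n)) m = Q.prod Q m := fun m => by simp [Q]
  let c : CliffordAlgebra (Q.prod Q) ≃ₐ[K] ExteriorAlgebra K (V K n × V K n) :=
    CliffordAlgebra.equivOfIsometry ⟨LinearEquiv.refl K _, hQ⟩
  have hc : ∀ z, jMap a b z = c ((CliffordAlgebra.prodEquiv Q Q).symm
      (GradedTensorProduct.of K (evenOdd Q) (evenOdd Q)
        (TensorProduct.map (Submodule.subtype _) (Submodule.subtype _) z))) := by
    intro z
    induction z using TensorProduct.induction_on with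
    | zero => simp only [map_zero]
    | add x y hx hy => rw [map_add, hx, hy]; simp only [map_add]
    | tmul x y =>
      have hcι (m) : c (CliffordAlgebra.ι (Q.prod Q) m) = ExteriorAlgebra.ι K m :=
        CliffordAlgebra.map_apply_ι _ _
      have hL : inlAlg = (c : _ →ₐ[K] _).comp (CliffordAlgebra.map (.inl Q Q)) := by
        refine CliffordAlgebra.hom_ext (LinearMap.ext fun m => ?_)
        refine (ExteriorAlgebra.map_apply_ι _ m).trans ?_
        refine (hcι _).symm.trans ?_
        exact congrArg c (CliffordAlgebra.map_apply_ι (QuadraticMap.Isometry.inl Q Q) m).symm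
      have hR : inrAlg = (c : _ →ₐ[K] _).comp (CliffordAlgebra.map (.inr Q Q)) := by
        refine CliffordAlgebra.hom_ext (LinearMap.ext fun m => ?_)
        refine (ExteriorAlgebra.map_apply_ι _ m).trans ?_
        refine (hcι _).symm.trans ?_
        exact congrArg c (CliffordAlgebra.map_apply_ι (QuadraticMap.Isometry.inr Q Q) m).symm
      rw [jMap_tmul, hL, hR]
      exact (map_mul c (CliffordAlgebra.map (QuadraticMap.Isometry.inl Q Q) x.1)
        (CliffordAlgebra.map (QuadraticMap.Isometry.inr Q Q) y.1)).symm
  intro x y hxy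
  rw [hc, hc] at hxy
  have := (GradedTensorProduct.of K (evenOdd Q) (evenOdd Q)).injective ((CliffordAlgebra.prodEquiv Q Q).symm.injective (c.injective hxy))
  exact TensorProduct.map_injective_of_flat_flat _ _ (Submodule.subtype_injective _) (Submodule.subtype_injective _) this

end Embedding

section Shuffle

set_option linter.unusedSectionVars false

variable {K : Type} [Field K] [CharZero K] {n : ℕ}

lemma jMap_wedge {p q : ℕ} (v : Fin p → V K n) (w : Fin q → V K n) :
    jMap p q (wedge K n v ⊗ₜ wedge K n w) =
      ExteriorAlgebra.ιMulti K (p + q)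
        (Fin.append (fun i => (v i, (0 : V K n))) fun i => ((0 : V K n), w i)) := by
  rw [jMap_tmul, wedge_coe, wedge_coe, ExteriorAlgebra.map_apply_ιMulti,
    ExteriorAlgebra.map_apply_ιMulti, ExteriorAlgebra.ιMulti_mul_ιMulti]
  rfl

/-- The image of the first `p` indices under a permutation. -/
def permHead {p q : ℕ} (σ : Equiv.Perm (Fin (p + q))) : Finset (Fin (p + q)) :=
  Finset.univ.filter fun x => (σ.symm x : ℕ) < p

lemma mem_permHead {p q : ℕ} (σ : Equiv.Perm (Fin (p + q))) (x : Fin (p + q)) :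
    σ x ∈ permHead σ ↔ (x : ℕ) < p := by simp [permHead]

lemma card_permHead {p q : ℕ} (σ : Equiv.Perm (Fin (p + q))) : (permHead σ).card = p := by
  have h : permHead σ = Finset.univ.map ((Fin.castAddEmb q).trans σ.toEmbedding) := by
    ext x
    obtain ⟨x, rfl⟩ := σ.surjective x
    rw [mem_permHead]
    simp only [Finset.mem_map, Finset.mem_univ, true_and, Function.Embedding.trans_apply,
      Equiv.coe_toEmbedding, σ.injective.eq_iff]
    exact ⟨fun h => ⟨⟨x, h⟩, rfl⟩, by rintro ⟨i, rfl⟩; exact i.2⟩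
  rw [h, Finset.card_map, Finset.card_univ, Fintype.card_fin]

lemma card_compl_permHead {p q : ℕ} (σ : Equiv.Perm (Fin (p + q))) :
    (permHead σ)ᶜ.card = q := by
  rw [Finset.card_compl, card_permHead, Fintype.card_fin]; omega

lemma shuffle_eq {p q : ℕ} {σ : Equiv.Perm (Fin (p + q))} (hσ : σ ∈ shuffles p q)
    (s : Finset (Fin (p + q))) (hs : s.card = p) (hs' : sᶜ.card = q) (h : permHead σ = s) :
    σ = finSumFinEquiv.symm.trans (finSumEquivOfFinset hs hs') := by
  rw [shuffles, Finset.mem_filter] at hσ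
  have h1 : (fun i => σ (Fin.castAdd q i)) = s.orderEmbOfFin hs := by
    refine Finset.orderEmbOfFin_unique hs (fun i => ?_) fun i j hij => ?_
    · rw [← h, mem_permHead]; exact i.2
    · exact hσ.2.1 _ _ hij j.2
  have h2 : (fun i => σ (Fin.natAdd p i)) = sᶜ.orderEmbOfFin hs' := by
    refine Finset.orderEmbOfFin_unique hs' (fun i => ?_) fun i j hij => ?_
    · rw [← h, Finset.mem_compl, mem_permHead]; simp
    · exact hσ.2.2 _ _ (by simpa using hij) (by simp)
  ext x
  induction x using Fin.addCases with
  | left i => simpa using congrArg Fin.val (congrFun h1 i)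
  | right i => simpa using congrArg Fin.val (congrFun h2 i)

lemma finSumEquiv_mem_shuffles {p q : ℕ} (s : Finset (Fin (p + q))) (hs : s.card = p)
    (hs' : sᶜ.card = q) :
    finSumFinEquiv.symm.trans (finSumEquivOfFinset hs hs') ∈ shuffles p q := by
  rw [shuffles, Finset.mem_filter]
  refine ⟨Finset.mem_univ _, fun i j hij hj => ?_, fun i j hij hi => ?_⟩
  · obtain ⟨j, rfl⟩ : ∃ j', j = Fin.castAdd q j' := ⟨⟨j, hj⟩, rfl⟩
    obtain ⟨i, rfl⟩ : ∃ i', i = Fin.castAdd q i' := ⟨⟨i, lt_trans (Fin.lt_def.1 hij) hj⟩, rfl⟩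
    have hij' : i < j := hij
    simpa using hij'
  · obtain ⟨i, rfl⟩ : ∃ i', i = Fin.natAdd p i' := ⟨⟨i - p, by omega⟩, by ext; simp; omega⟩
    obtain ⟨j, rfl⟩ : ∃ j', j = Fin.natAdd p j' :=
      ⟨⟨j - p, by omega⟩, by ext; simp [Fin.lt_def] at hij ⊢; omega⟩
    simpa using hij

lemma permHead_finSumEquiv {p q : ℕ} (s : Finset (Fin (p + q))) (hs : s.card = p)
    (hs' : sᶜ.card = q) :
    permHead (finSumFinEquiv.symm.trans (finSumEquivOfFinset hs hs')) = s := by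
  symm
  refine Finset.eq_of_subset_of_card_le ?_ ?_ |>.symm
  · intro x hx
    obtain ⟨x, rfl⟩ := (finSumFinEquiv.symm.trans (finSumEquivOfFinset hs hs')).surjective x
    rw [mem_permHead] at hx
    obtain ⟨x, rfl⟩ : ∃ x', x = Fin.castAdd q x' := ⟨⟨x, hx⟩, rfl⟩
    simp
  · rw [card_permHead, hs]

lemma jMap_comul_wedge {p q : ℕ} {D : Lam K n (p + q) →ₗ[K] Lam K n p ⊗[K] Lam K n q}
    (hD : IsComulMap K n p q D) (v : Fin (p + q) → V K n) :
    jMap p q (D (wedge K n v)) = ∑ s : Finset (Fin (p + q)) with sᶜ.card = q,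
      ExteriorAlgebra.ιMulti K (p + q)
        (s.piecewise (fun i => (v i, (0 : V K n))) fun i => ((0 : V K n), v i)) := by
  rw [hD, map_sum]
  refine Finset.sum_nbij permHead (fun σ _ => ?_) (fun σ hσ σ' hσ' h => ?_) (fun s hs => ?_)
    fun σ _ => ?_
  · simpa using card_compl_permHead σ
  · rw [shuffle_eq hσ _ (card_permHead σ') (card_compl_permHead σ') h,
      ← shuffle_eq hσ' _ (card_permHead σ') (card_compl_permHead σ') rfl]
  · have hs' : sᶜ.card = q := by simpa using hs
    have hs1 : s.card = p := by
      have := s.card_add_card_compl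
      rw [Fintype.card_fin] at this; omega
    exact ⟨_, finSumEquiv_mem_shuffles s hs1 hs', permHead_finSumEquiv s hs1 hs'⟩
  · rw [map_zsmul, jMap_wedge]
    have h : (Fin.append (fun i => (v (σ (Fin.castAdd q i)), (0 : V K n)))
        fun i => ((0 : V K n), v (σ (Fin.natAdd p i)))) =
        ((permHead σ).piecewise (fun i => (v i, (0 : V K n))) fun i => ((0 : V K n), v i)) ∘ σ := by
      funext x
      rw [Function.comp_apply]
      induction x using Fin.addCases with
      | left i =>
        rw [Finset.piecewise_eq_of_mem _ _ _ ((mem_permHead _ _).2 i.2), Fin.append_left]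
      | right i =>
        rw [Finset.piecewise_eq_of_notMem _ _ _ (by rw [mem_permHead]; simp), Fin.append_right]
    rw [h, AlternatingMap.map_perm]
    rw [Units.smul_def, smul_smul]
    simp

end Shuffle

section Polarization

set_option linter.unusedSectionVars false

variable (K : Type) [Field K] [CharZero K] (n : ℕ)

/-- The endomorphism `(x, y) ↦ (y, 0)` of `V × V`. -/
def raiseMap : (V K n × V K n) →ₗ[K] V K n × V K n :=
  LinearMap.inl K _ _ ∘ₗ LinearMap.snd K _ _

/-- The endomorphism `(x, y) ↦ (0, x)` of `V × V`. -/
def lowerMap : (V K n × V K n) →ₗ[K] V K n × V K n :=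
  LinearMap.inr K _ _ ∘ₗ LinearMap.fst K _ _

/-- The endomorphism `(x, y) ↦ (x, -y)` of `V × V`. -/
def weightMap : (V K n × V K n) →ₗ[K] V K n × V K n :=
  LinearMap.prodMap LinearMap.id (-LinearMap.id)

/-- The raising polarization operator on `Λ (V × V)`. -/
abbrev opE : Module.End K (ExteriorAlgebra K (V K n × V K n)) := extDer (raiseMap K n)

/-- The lowering polarization operator on `Λ (V × V)`. -/
abbrev opF : Module.End K (ExteriorAlgebra K (V K n × V K n)) := extDer (lowerMap K n)

/-- The weight operator on `Λ (V × V)`. -/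
abbrev opH : Module.End K (ExteriorAlgebra K (V K n × V K n)) := extDer (weightMap K n)

lemma sl2Relations_op : Sl2Relations (opE K n) (opF K n) (opH K n) where
  lie_h_e := by
    rw [← extDer_smul]
    refine extDer_bracket _ _ _ fun m => ?_
    ext <;> simp [weightMap, raiseMap]; ring
  lie_h_f := by
    rw [← extDer_smul]
    refine extDer_bracket _ _ _ fun m => ?_
    ext <;> simp [weightMap, lowerMap]; ring
  lie_e_f := by
    refine extDer_bracket _ _ _ fun m => ?_
    ext <;> simp [weightMap, raiseMap, lowerMap]

variable {K n}

lemma expCoeff_raiseMap (t : ℕ) : expCoeff (raiseMap K n) t = divPow (opE K n) t :=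
  expCoeff_eq_divPow _ (fun m => by simp [raiseMap]) t

lemma expCoeff_lowerMap (t : ℕ) : expCoeff (lowerMap K n) t = divPow (opF K n) t :=
  expCoeff_eq_divPow _ (fun m => by simp [lowerMap]) t

lemma opE_inlAlg (x : ExteriorAlgebra K (V K n)) : opE K n (inlAlg x) = 0 := by
  rw [extDer_map ((0 : K) • LinearMap.id) _ _ (fun m => by simp [raiseMap]), extDer_smul]
  simp

lemma opF_inrAlg (x : ExteriorAlgebra K (V K n)) : opF K n (inrAlg x) = 0 := by
  rw [extDer_map ((0 : K) • LinearMap.id) _ _ (fun m => by simp [lowerMap]), extDer_smul]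
  simp

lemma opH_inlAlg {a : ℕ} (x : Lam K n a) :
    opH K n (inlAlg x.1) = (a : K) • inlAlg x.1 := by
  induction x using lam_induction with
  | hw v =>
    rw [wedge_coe, ExteriorAlgebra.map_apply_ιMulti,
      extDer_ιMulti_of_eigen _ 1 _ (fun i => by simp [weightMap]), mul_one]
  | hadd x y hx hy => simp [hx, hy]
  | hsmul c x hx => simp [hx, smul_comm c]

lemma opH_inrAlg {a : ℕ} (x : Lam K n a) :
    opH K n (inrAlg x.1) = (-a : K) • inrAlg x.1 := by
  induction x using lam_induction with
  | hw v =>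
    rw [wedge_coe, ExteriorAlgebra.map_apply_ιMulti,
      extDer_ιMulti_of_eigen _ (-1) _ (fun i => by simp [weightMap]), mul_neg_one]
  | hadd x y hx hy => simp only [Submodule.coe_add, map_add, hx, hy, smul_add]
  | hsmul c x hx => simp only [Submodule.coe_smul, map_smul, hx, smul_comm c]

lemma opE_inlAlg_mul (x : ExteriorAlgebra K (V K n)) (w : ExteriorAlgebra K (V K n × V K n)) :
    opE K n (inlAlg x * w) = inlAlg x * opE K n w := by
  rw [extDer_mul, opE_inlAlg, zero_mul, zero_add]

lemma opF_mul_inrAlg (w : ExteriorAlgebra K (V K n × V K n)) (y : ExteriorAlgebra K (V K n)) :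
    opF K n (w * inrAlg y) = opF K n w * inrAlg y := by
  rw [extDer_mul, opF_inrAlg, mul_zero, add_zero]

lemma divPow_opE_inlAlg_mul (t : ℕ) (x : ExteriorAlgebra K (V K n))
    (w : ExteriorAlgebra K (V K n × V K n)) :
    divPow (opE K n) t (inlAlg x * w) = inlAlg x * divPow (opE K n) t w := by
  induction t with
  | zero => simp [divPow_zero]
  | succ t ih =>
    rw [divPow_succ, LinearMap.smul_apply, LinearMap.smul_apply, Module.End.mul_apply,
      Module.End.mul_apply, ih, opE_inlAlg_mul, mul_smul_comm]

lemma opH_jMap {a b : ℕ} (z : Lam K n a ⊗[K] Lam K n b) :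
    opH K n (jMap a b z) = ((a : K) - b) • jMap a b z := by
  induction z using TensorProduct.induction_on with
  | zero => simp
  | add x y hx hy => simp [hx, hy]
  | tmul x y =>
    rw [jMap_tmul, extDer_mul, opH_inlAlg, opH_inrAlg, smul_mul_assoc, mul_smul_comm, ← add_smul,
      sub_eq_add_neg]

lemma jMap_comul_eq_divPow_opF {p q : ℕ} {D : Lam K n (p + q) →ₗ[K] Lam K n p ⊗[K] Lam K n q}
    (hD : IsComulMap K n p q D) (x : Lam K n (p + q)) :
    jMap p q (D x) = divPow (opF K n) q (inlAlg x.1) := by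
  induction x using lam_induction with
  | hadd x y hx hy => simp [hx, hy]
  | hsmul c x hx => simp [hx]
  | hw v =>
    rw [jMap_comul_wedge hD, wedge_coe, ExteriorAlgebra.map_apply_ιMulti, ← expCoeff_lowerMap,
      expCoeff_ιMulti]
    rfl

lemma jMap_comul_eq_divPow_opE {p q : ℕ} {D : Lam K n (p + q) →ₗ[K] Lam K n p ⊗[K] Lam K n q}
    (hD : IsComulMap K n p q D) (x : Lam K n (p + q)) :
    jMap p q (D x) = divPow (opE K n) p (inrAlg x.1) := by
  induction x using lam_induction with
  | hadd x y hx hy => simp [hx, hy]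
  | hsmul c x hx => simp [hx]
  | hw v =>
    rw [jMap_comul_wedge hD, wedge_coe, ExteriorAlgebra.map_apply_ιMulti, ← expCoeff_raiseMap,
      expCoeff_ιMulti]
    refine Finset.sum_nbij' compl compl (fun s hs => ?_) (fun s hs => ?_) (fun s _ => compl_compl s)
      (fun s _ => compl_compl s) fun s _ => ?_
    · have := s.card_add_card_compl
      simp_all
    · have := s.card_add_card_compl
      simp_all
      omega
    · rw [Finset.piecewise_compl]
      rfl

variable (K n) in
/-- The bihomogeneous component `Λ^a V ∧ Λ^b V` of `Λ (V × V)`. -/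
def biDeg (a b : ℕ) : Submodule K (ExteriorAlgebra K (V K n × V K n)) := (jMap a b).range

lemma jMap_mem_biDeg {a b : ℕ} (z : Lam K n a ⊗[K] Lam K n b) : jMap a b z ∈ biDeg K n a b :=
  ⟨z, rfl⟩

lemma opH_of_mem_biDeg {a b : ℕ} {w} (hw : w ∈ biDeg K n a b) :
    opH K n w = ((a : K) - b) • w := by
  obtain ⟨z, rfl⟩ := hw
  exact opH_jMap z

lemma mul_mem_exteriorPower {p q : ℕ} (x : Lam K n p) (y : Lam K n q) :
    x.1 * y.1 ∈ ⋀[K]^(p + q) (V K n) := by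
  rw [ExteriorAlgebra.exteriorPower, pow_add]
  exact Submodule.mul_mem_mul x.2 y.2

lemma inlAlg_mul_mem_biDeg {p a b : ℕ} (x : Lam K n p) {w} (hw : w ∈ biDeg K n a b) :
    inlAlg x.1 * w ∈ biDeg K n (p + a) b := by
  obtain ⟨z, rfl⟩ := hw
  induction z using TensorProduct.induction_on with
  | zero => simp
  | add z z' hz hz' => rw [map_add, mul_add]; exact add_mem hz hz'
  | tmul x' y =>
    rw [jMap_tmul, ← mul_assoc, ← map_mul]
    exact jMap_mem_biDeg ((⟨_, mul_mem_exteriorPower x x'⟩ : Lam K n (p + a)) ⊗ₜ y)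

lemma mul_inrAlg_mem_biDeg {q a b : ℕ} {w} (hw : w ∈ biDeg K n a b) (y : Lam K n q) :
    w * inrAlg y.1 ∈ biDeg K n a (b + q) := by
  obtain ⟨z, rfl⟩ := hw
  induction z using TensorProduct.induction_on with
  | zero => simp
  | add z z' hz hz' => rw [map_add, add_mul]; exact add_mem hz hz'
  | tmul x y' =>
    rw [jMap_tmul, mul_assoc, ← map_mul]
    exact jMap_mem_biDeg (x ⊗ₜ (⟨_, mul_mem_exteriorPower y' y⟩ : Lam K n (b + q)))

lemma opE_mem_biDeg {Df : ∀ p q : ℕ, Lam K n (p + q) →ₗ[K] Lam K n p ⊗[K] Lam K n q}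
    (hDf : ∀ p q, IsComulMap K n p q (Df p q)) {a b : ℕ} {w} (hw : w ∈ biDeg K n a (b + 1)) :
    opE K n w ∈ biDeg K n (a + 1) b := by
  obtain ⟨z, rfl⟩ := hw
  induction z using TensorProduct.induction_on with
  | zero => simp
  | add z z' hz hz' => rw [map_add, map_add]; exact add_mem hz hz'
  | tmul x y =>
    rw [jMap_tmul, opE_inlAlg_mul]
    refine inlAlg_mul_mem_biDeg x ?_
    have h := jMap_comul_eq_divPow_opE (hDf 1 b) (ecast K n (add_comm b 1) y)
    rw [coe_ecast, divPow_one] at h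
    rw [← h]
    exact jMap_mem_biDeg _

lemma opF_mem_biDeg {Df : ∀ p q : ℕ, Lam K n (p + q) →ₗ[K] Lam K n p ⊗[K] Lam K n q}
    (hDf : ∀ p q, IsComulMap K n p q (Df p q)) {a b : ℕ} {w} (hw : w ∈ biDeg K n (a + 1) b) :
    opF K n w ∈ biDeg K n a (b + 1) := by
  obtain ⟨z, rfl⟩ := hw
  induction z using TensorProduct.induction_on with
  | zero => simp
  | add z z' hz hz' => rw [map_add, map_add]; exact add_mem hz hz'
  | tmul x y =>
    rw [jMap_tmul, opF_mul_inrAlg, add_comm]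
    refine mul_inrAlg_mem_biDeg ?_ y
    have h := jMap_comul_eq_divPow_opF (hDf a 1) x
    rw [divPow_one] at h
    rw [← h]
    exact jMap_mem_biDeg _

lemma opE_of_mem_biDeg_zero {a : ℕ} {w} (hw : w ∈ biDeg K n a 0) : opE K n w = 0 := by
  obtain ⟨z, rfl⟩ := hw
  induction z using lam_tensor_induction with
  | hadd z z' hz hz' => simp [hz, hz']
  | hsmul c z hz => simp [hz]
  | hw v w =>
    rw [jMap_tmul, opE_inlAlg_mul, wedge_coe w, ExteriorAlgebra.ιMulti_zero_apply, map_one,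
      ← map_one (algebraMap K _), extDer_algebraMap, mul_zero]

end Polarization

section Comparison

set_option linter.unusedSectionVars false

variable {K : Type} [Field K] [CharZero K] {n : ℕ}
variable {mf : ∀ p q : ℕ, Lam K n p ⊗[K] Lam K n q →ₗ[K] Lam K n (p + q)}
variable {Df : ∀ p q : ℕ, Lam K n (p + q) →ₗ[K] Lam K n p ⊗[K] Lam K n q}

lemma inrAlg_mul_inlAlg {p q : ℕ} (x : Lam K n p) (y : Lam K n q) :
    inrAlg y.1 * inlAlg x.1 = (-1 : K) ^ (q * p) • (inlAlg x.1 * inrAlg y.1) := by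
  induction x using lam_induction with
  | hadd x x' hx hx' => simp only [Submodule.coe_add, map_add, mul_add, add_mul, smul_add, hx, hx']
  | hsmul c x hx =>
    simp only [Submodule.coe_smul, map_smul, mul_smul_comm, smul_mul_assoc, hx, smul_comm c]
  | hw v =>
    induction y using lam_induction with
    | hadd y y' hy hy' =>
      simp only [Submodule.coe_add, map_add, mul_add, add_mul, smul_add, hy, hy']
    | hsmul c y hy =>
      simp only [Submodule.coe_smul, map_smul, mul_smul_comm, smul_mul_assoc, hy, smul_comm c]
    | hw w =>
      rw [wedge_coe, wedge_coe, ExteriorAlgebra.map_apply_ιMulti,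
        ExteriorAlgebra.map_apply_ιMulti, ιMulti_mul_ιMulti_comm]

lemma jMap_map_assoc {p q r r' : ℕ} (hm : IsMulMap K n q r (mf q r)) (h : q + r = r')
    (ξ : Lam K n p ⊗[K] Lam K n q) (y : Lam K n r) :
    jMap p r' (TensorProduct.map LinearMap.id ((ecast K n h).toLinearMap ∘ₗ mf q r)
      (TensorProduct.assoc K (Lam K n p) (Lam K n q) (Lam K n r) (ξ ⊗ₜ y))) =
      jMap p q ξ * inrAlg y.1 := by
  induction ξ using TensorProduct.induction_on with
  | zero => simp
  | add ξ ξ' hξ hξ' => simp only [TensorProduct.add_tmul, map_add, add_mul, hξ, hξ']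
  | tmul x y' =>
    rw [TensorProduct.assoc_tmul, TensorProduct.map_tmul, jMap_tmul, jMap_tmul]
    simp only [LinearMap.comp_apply, LinearEquiv.coe_coe, LinearMap.id_apply]
    rw [coe_ecast, coe_mul_map hm, map_mul, mul_assoc]

lemma jMap_theta1 (hmf : ∀ p q, IsMulMap K n p q (mf p q))
    (hDf : ∀ p q, IsComulMap K n p q (Df p q)) (a b : ℕ) (hb : 1 ≤ b)
    (z : Lam K n (a + 1) ⊗[K] Lam K n (b - 1)) :
    jMap a b (theta1 K n mf Df a b hb z) = opF K n (jMap (a + 1) (b - 1) z) := by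
  induction z using TensorProduct.induction_on with
  | zero => simp
  | add z z' hz hz' => simp only [map_add, hz, hz']
  | tmul x y =>
    rw [theta1, LinearMap.comp_apply, LinearEquiv.coe_coe, jMap_ecast, thetaMap,
      LinearMap.comp_apply, LinearMap.comp_apply, LinearEquiv.coe_coe, TensorProduct.map_tmul,
      LinearMap.id_apply, jMap_map_assoc (hmf _ _), jMap_tmul, opF_mul_inrAlg,
      LinearMap.comp_apply, jMap_comul_eq_divPow_opF (hDf _ _), divPow_one, LinearEquiv.coe_coe,
      coe_ecast]

lemma jMap_pairMul (hmf : ∀ p q, IsMulMap K n p q (mf p q)) {p q p' q' : ℕ}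
    (ξ : Lam K n p ⊗[K] Lam K n q) (η : Lam K n p' ⊗[K] Lam K n q') :
    jMap (p + p') (q + q') (pairMul K n mf p q p' q' (ξ ⊗ₜ η)) =
      (-1 : K) ^ (q * p') • (jMap p q ξ * jMap p' q' η) := by
  induction ξ using TensorProduct.induction_on with
  | zero => simp
  | add ξ ξ' h h' => simp only [TensorProduct.add_tmul, map_add, add_mul, smul_add, h, h']
  | tmul x y =>
    induction η using TensorProduct.induction_on with
    | zero => simp
    | add η η' h h' => simp only [TensorProduct.tmul_add, map_add, mul_add, smul_add, h, h']
    | tmul x' y' =>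
      have h : inlAlg x.1 * inrAlg y.1 * (inlAlg x'.1 * inrAlg y'.1) =
          inlAlg x.1 * (inrAlg y.1 * inlAlg x'.1) * inrAlg y'.1 := by noncomm_ring
      rw [pairMul, LinearMap.comp_apply, LinearEquiv.coe_coe,
        TensorProduct.tensorTensorTensorComm_tmul, TensorProduct.map_tmul, jMap_tmul, jMap_tmul,
        jMap_tmul, coe_mul_map (hmf _ _), coe_mul_map (hmf _ _), map_mul, map_mul, h,
        inrAlg_mul_inlAlg, mul_smul_comm, smul_mul_assoc, smul_smul, ← mul_pow, neg_one_mul,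
        neg_neg, one_pow, one_smul]
      noncomm_ring

lemma jMap_phiSmall (hmf : ∀ p q, IsMulMap K n p q (mf p q))
    (hDf : ∀ p q, IsComulMap K n p q (Df p q)) {a b k : ℕ} (hka : k ≤ a) (hkb : k ≤ b)
    (x : Lam K n a) (y : Lam K n b) :
    jMap a b (phiSmall K n mf Df a b k hka hkb (x ⊗ₜ y)) =
      (-1 : K) ^ k • (divPow (opF K n) k (inlAlg x.1) * divPow (opE K n) k (inrAlg y.1)) := by
  have h : (-1 : K) ^ (k * k) = (-1) ^ k := by
    rcases Nat.even_or_odd k with h | h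
    · rw [h.neg_one_pow, (h.mul_left k).neg_one_pow]
    · rw [h.neg_one_pow, (h.mul h).neg_one_pow]
  rw [phiSmall, LinearMap.comp_apply, LinearEquiv.coe_coe, jMap_ecast, LinearMap.comp_apply,
    TensorProduct.map_tmul, jMap_pairMul hmf, LinearMap.comp_apply, LinearMap.comp_apply,
    jMap_comul_eq_divPow_opF (hDf _ _), jMap_comul_eq_divPow_opE (hDf _ _), LinearEquiv.coe_coe,
    LinearEquiv.coe_coe, coe_ecast, coe_ecast, h]

lemma divPow_opF_divPow_opE_mul {a b t : ℕ} (x : Lam K n a) (y : Lam K n b) (ht : t ≤ b) :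
    divPow (opF K n) t (divPow (opE K n) t (inlAlg x.1 * inrAlg y.1)) =
      ∑ i ∈ Finset.range (t + 1), ((b - i).choose (t - i) : K) •
        (divPow (opF K n) i (inlAlg x.1) * divPow (opE K n) i (inrAlg y.1)) := by
  rw [divPow_opE_inlAlg_mul, ← expCoeff_lowerMap, expCoeff_mul,
    Finset.Nat.sum_antidiagonal_eq_sum_range_succ_mk]
  refine Finset.sum_congr rfl fun i hi => ?_
  have hi' : i ≤ t := by simpa [Nat.lt_succ_iff] using hi
  have h := (sl2Relations_op K n).swap.divPow_e_divPow_f (m := b) (v := inrAlg y.1)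
    (by rw [LinearMap.neg_apply, opH_inrAlg, neg_smul, neg_neg]) (opF_inrAlg _) (t - i) i (by omega)
  rw [Nat.sub_add_cancel hi'] at h
  rw [expCoeff_lowerMap, expCoeff_lowerMap, h, mul_smul_comm]

variable (K n) in
/-- The operator on `Λ (V × V)` inducing `ψ_k` on the component of bidegree `(a, b)`. -/
def psiOp (b k : ℕ) : Module.End K (ExteriorAlgebra K (V K n × V K n)) :=
  ∑ t ∈ Finset.Icc 1 b, ((-1 : K) ^ (t - 1) * ((b - t).choose (b - k) : K)) •
    (divPow (opF K n) t * divPow (opE K n) t)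

lemma jMap_psiSmall (hmf : ∀ p q, IsMulMap K n p q (mf p q))
    (hDf : ∀ p q, IsComulMap K n p q (Df p q)) {a b k : ℕ} (hka : k ≤ a) (hkb : k ≤ b)
    (z : Lam K n a ⊗[K] Lam K n b) :
    jMap a b (psiSmall K n mf Df a b k hka hkb z) = psiOp K n b k (jMap a b z) := by
  induction z using TensorProduct.induction_on with
  | zero => simp
  | add z z' hz hz' => simp only [map_add, hz, hz']
  | tmul x y =>
    rw [psiSmall, LinearMap.sub_apply, map_sub, jMap_phiSmall hmf hDf,
      ← sum_choose_mul_inverse _ _ (fun t ht => divPow_opF_divPow_opE_mul x y ht) k hkb,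
      Finset.sum_range_succ', jMap_tmul, psiOp]
    simp only [LinearMap.smul_apply, map_smul, LinearMap.id_apply, jMap_tmul, pow_zero, one_mul,
      Nat.sub_zero, divPow_zero, Module.End.one_apply, LinearMap.sum_apply, Module.End.mul_apply]
    rw [sub_add_eq_sub_sub_swap, sub_self, zero_sub, ← Finset.sum_neg_distrib]
    have h : ∀ t ∈ Finset.Icc 1 b, t ∉ Finset.Icc 1 k → (((-1 : K) ^ (t - 1) *
        ((b - t).choose (b - k) : K)) • divPow (opF K n) t (divPow (opE K n) t
          (inlAlg x.1 * inrAlg y.1))) = 0 := by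
      intro t ht htk
      rw [Finset.mem_Icc] at ht htk
      rw [Nat.choose_eq_zero_of_lt (by omega : b - t < b - k)]
      simp
    rw [← Finset.sum_subset (Finset.Icc_subset_Icc_right hkb) h, Finset.range_eq_Ico,
      Finset.sum_Ico_add' (fun t => -(((-1 : K) ^ t * ((b - t).choose (k - t) : K)) •
        divPow (opF K n) t (divPow (opE K n) t (inlAlg x.1 * inrAlg y.1)))) 0 k 1]
    refine Finset.sum_congr (by ext; simp) fun t ht => ?_
    rw [Finset.mem_Icc] at ht
    obtain ⟨t, rfl⟩ : ∃ s, t = s + 1 := ⟨t - 1, by omega⟩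
    rw [← neg_smul, Nat.add_sub_cancel, pow_succ,
      ← Nat.choose_symm_of_eq_add (by omega : b - (t + 1) = (k - (t + 1)) + (b - k))]
    congr 1
    ring

end Comparison

section Decomposition

set_option linter.unusedSectionVars false

variable {K : Type} [Field K] [CharZero K] {n : ℕ}
variable {Df : ∀ p q : ℕ, Lam K n (p + q) →ₗ[K] Lam K n p ⊗[K] Lam K n q}

lemma divPow_opE_mem_biDeg (hDf : ∀ p q, IsComulMap K n p q (Df p q)) {a b : ℕ} (t : ℕ) {w}
    (hw : w ∈ biDeg K n a (b + t)) : divPow (opE K n) t w ∈ biDeg K n (a + t) b := by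
  induction t generalizing b with
  | zero => simpa [divPow_zero] using hw
  | succ t ih =>
    rw [divPow_succ, LinearMap.smul_apply, Module.End.mul_apply]
    exact Submodule.smul_mem _ _ (opE_mem_biDeg hDf (ih (b := b + 1) (by rwa [add_right_comm])))

lemma divPow_opF_mem_biDeg (hDf : ∀ p q, IsComulMap K n p q (Df p q)) {a b : ℕ} (t : ℕ) {w}
    (hw : w ∈ biDeg K n (a + t) b) : divPow (opF K n) t w ∈ biDeg K n a (b + t) := by
  induction t generalizing a with
  | zero => simpa [divPow_zero] using hw
  | succ t ih =>
    rw [divPow_succ, LinearMap.smul_apply, Module.End.mul_apply]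
    exact Submodule.smul_mem _ _ (opF_mem_biDeg hDf (ih (a := a + 1) (by rwa [add_right_comm])))

variable (K n) in
/-- The vectors `F^i / i! · v` of bidegree `(a, b)` with `v` of highest weight. -/
def stringVectors (a b : ℕ) : Set (ExteriorAlgebra K (V K n × V K n)) :=
  {u | ∃ i d v, d + i = b ∧ v ∈ biDeg K n (a + i) d ∧ opE K n v = 0 ∧ divPow (opF K n) i v = u}

lemma stringVectors_subset_biDeg (hDf : ∀ p q, IsComulMap K n p q (Df p q)) {a b : ℕ} :
    stringVectors K n a b ⊆ biDeg K n a b := by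
  rintro _ ⟨i, d, v, rfl, hv, -, rfl⟩
  exact divPow_opF_mem_biDeg hDf i hv

lemma span_stringVectors_le_biDeg (hDf : ∀ p q, IsComulMap K n p q (Df p q)) {a b : ℕ} :
    Submodule.span K (stringVectors K n a b) ≤ biDeg K n a b :=
  Submodule.span_le.2 (stringVectors_subset_biDeg hDf)

lemma biDeg_le_span_stringVectors (hDf : ∀ p q, IsComulMap K n p q (Df p q)) {a b : ℕ}
    (hba : b ≤ a) : biDeg K n a b ≤ Submodule.span K (stringVectors K n a b) := by
  induction b generalizing a with
  | zero =>
    exact fun w hw => Submodule.subset_span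
      ⟨0, 0, w, rfl, hw, opE_of_mem_biDeg_zero hw, by simp [divPow_zero]⟩
  | succ b ih =>
    intro w hw
    have key : ∀ u ∈ Submodule.span K (stringVectors K n (a + 1) b),
        ∃ z ∈ Submodule.span K (stringVectors K n a (b + 1)), opE K n z = u := by
      intro u hu
      induction hu using Submodule.span_induction with
      | zero => exact ⟨0, zero_mem _, map_zero _⟩
      | add u u' _ _ h h' =>
        obtain ⟨z, hz, rfl⟩ := h
        obtain ⟨z', hz', rfl⟩ := h'
        exact ⟨z + z', add_mem hz hz', map_add _ _ _⟩
      | smul c u _ h =>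
        obtain ⟨z, hz, rfl⟩ := h
        exact ⟨c • z, Submodule.smul_mem _ _ hz, map_smul _ _ _⟩
      | mem u hu =>
        obtain ⟨i, d, v, rfl, hv, hE, rfl⟩ := hu
        have hμ := (sl2Relations_op K n).e_divPow_f (opH_of_mem_biDeg hv) hE i
        have h0 : (((a + 1 + i : ℕ) : K) - d) - i ≠ 0 := by
          obtain ⟨c, rfl⟩ := Nat.exists_eq_add_of_le hba
          have : (((d + i + 1 + c + 1 + i : ℕ) : K) - d) - i = ((1 + c + 1 + i : ℕ) : K) := by
            push_cast; ring
          rw [this]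
          exact_mod_cast (by omega : 1 + c + 1 + i ≠ 0)
        refine ⟨((((a + 1 + i : ℕ) : K) - d) - i)⁻¹ • divPow (opF K n) (i + 1) v,
          Submodule.smul_mem _ _ (Submodule.subset_span ⟨i + 1, d, v, by omega, ?_, hE, rfl⟩), ?_⟩
        · rwa [← add_assoc, add_right_comm]
        · rw [map_smul, hμ, inv_smul_smul₀ h0]
    obtain ⟨z, hz, hzw⟩ := key _ (ih (by omega) (opE_mem_biDeg hDf hw))
    rw [← sub_add_cancel w z]
    refine add_mem (Submodule.subset_span ⟨0, b + 1, w - z, rfl,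
      sub_mem hw (span_stringVectors_le_biDeg hDf hz), ?_, by simp [divPow_zero]⟩) hz
    rw [map_sub, hzw, sub_self]

variable (K) in
/-- The eigenvalue of `psiOp b k` on the `j`-th string vectors of bidegree `(a, b)`. -/
def psiEigenvalue (a b k j : ℕ) : K :=
  ∑ t ∈ Finset.Icc 1 j, (-1 : K) ^ (t - 1) * ((b - t).choose (b - k) : K) * (j.choose t : K) *
    ((a - b + j + t).choose t : K)

lemma psiOp_divPow_opF {a b k j d : ℕ} (hba : b ≤ a) (hd : d + j = b) {v}
    (hv : v ∈ biDeg K n (a + j) d) (hE : opE K n v = 0) :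
    psiOp K n b k (divPow (opF K n) j v) =
      psiEigenvalue K a b k j • divPow (opF K n) j v := by
  have hv' : opH K n v = ((a - b + j + j : ℕ) : K) • v := by
    rw [opH_of_mem_biDeg hv]
    obtain ⟨c, rfl⟩ := Nat.exists_eq_add_of_le hba
    rw [Nat.add_sub_cancel_left, ← hd]
    push_cast
    congr 1; ring
  have h (t : ℕ) := (sl2Relations_op K n).divPow_f_divPow_e_divPow_f hv' hE
    (by omega : j ≤ a - b + j + j) t
  rw [psiOp, psiEigenvalue, Finset.sum_smul, LinearMap.sum_apply]
  symm
  refine (Finset.sum_subset (Finset.Icc_subset_Icc_right (by omega : j ≤ b)) ?_).trans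
    (Finset.sum_congr rfl fun t _ => ?_)
  · intro t _ ht'
    rw [Nat.choose_eq_zero_of_lt (n := j) (by simp_all)]
    simp
  · rw [LinearMap.smul_apply, Module.End.mul_apply, h, smul_smul, Nat.add_sub_cancel, mul_assoc,
      mul_assoc]

lemma psiOp_mem_map_opF (hDf : ∀ p q, IsComulMap K n p q (Df p q)) {a b : ℕ} (k : ℕ) {z}
    (hz : z ∈ biDeg K n a b) :
    psiOp K n b k z ∈ (biDeg K n (a + 1) (b - 1)).map (opF K n) := by
  rw [psiOp, LinearMap.sum_apply]
  refine Submodule.sum_mem _ fun t ht => ?_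
  obtain ⟨s, rfl⟩ : ∃ s, t = s + 1 := ⟨t - 1, by simp at ht; omega⟩
  obtain ⟨c, rfl⟩ : ∃ c, b = c + (s + 1) := ⟨b - (s + 1), by simp at ht; omega⟩
  rw [LinearMap.smul_apply, Module.End.mul_apply, divPow_succ (opF K n), LinearMap.smul_apply,
    Module.End.mul_apply]
  refine Submodule.smul_mem _ _ (Submodule.smul_mem _ _ (Submodule.mem_map_of_mem ?_))
  refine divPow_opF_mem_biDeg hDf s (?_ : _ ∈ biDeg K n (a + 1 + s) c)
  rw [add_assoc, add_comm 1 s]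
  exact divPow_opE_mem_biDeg hDf (s + 1) hz

lemma exists_psiOp_eq_opF (hDf : ∀ p q, IsComulMap K n p q (Df p q)) {a b k : ℕ} (hba : b ≤ a)
    (hb : 1 ≤ b) (hk : ∀ j, 1 ≤ j → j ≤ b → psiEigenvalue K a b k j ≠ 0) {y}
    (hy : y ∈ biDeg K n (a + 1) (b - 1)) : ∃ z ∈ biDeg K n a b, psiOp K n b k z = opF K n y := by
  have hy' := biDeg_le_span_stringVectors hDf (by omega) hy
  induction hy' using Submodule.span_induction with
  | zero => exact ⟨0, zero_mem _, by simp⟩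
  | add u u' hu hu' h h' =>
    obtain ⟨z, hz, h⟩ := h (span_stringVectors_le_biDeg hDf hu)
    obtain ⟨z', hz', h'⟩ := h' (span_stringVectors_le_biDeg hDf hu')
    exact ⟨z + z', add_mem hz hz', by rw [map_add, map_add, h, h']⟩
  | smul c u hu h =>
    obtain ⟨z, hz, h⟩ := h (span_stringVectors_le_biDeg hDf hu)
    exact ⟨c • z, Submodule.smul_mem _ _ hz, by rw [map_smul, map_smul, h]⟩
  | mem u hu =>
    obtain ⟨i, d, v, hd, hv, hE, rfl⟩ := hu
    have hv' : v ∈ biDeg K n (a + (i + 1)) d := by rwa [← add_assoc, add_right_comm]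
    have hd' : d + (i + 1) = b := by omega
    refine ⟨(psiEigenvalue K a b k (i + 1))⁻¹ • opF K n (divPow (opF K n) i v), ?_, ?_⟩
    · have := opF_mem_biDeg hDf hy
      rw [Nat.sub_add_cancel hb] at this
      exact Submodule.smul_mem _ _ this
    · rw [← Module.End.mul_apply (opF K n), mul_divPow, LinearMap.smul_apply, map_smul, map_smul,
        psiOp_divPow_opF hba hd' hv' hE, smul_comm _ (psiEigenvalue K a b k (i + 1)),
        inv_smul_smul₀ (hk _ (by omega) (by omega))]

lemma psiOp_eq_zero_of_psiOp_psiOp_eq_zero (hDf : ∀ p q, IsComulMap K n p q (Df p q)) {a b k : ℕ}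
    (hba : b ≤ a) {z} (hz : z ∈ biDeg K n a b) (h : psiOp K n b k (psiOp K n b k z) = 0) :
    psiOp K n b k z = 0 := by
  have h1 : psiOp K n b k z ∈ ⨆ (μ : K) (_ : μ ≠ 0), (psiOp K n b k).eigenspace μ := by
    have hz' := biDeg_le_span_stringVectors hDf hba hz
    clear h hz
    induction hz' using Submodule.span_induction with
    | zero => simp
    | add u u' _ _ h h' => rw [map_add]; exact add_mem h h'
    | smul c u _ h => rw [map_smul]; exact Submodule.smul_mem _ _ h
    | mem u hu =>
      obtain ⟨i, d, v, hd, hv, hE, rfl⟩ := hu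
      rw [psiOp_divPow_opF hba hd hv hE]
      by_cases h0 : psiEigenvalue K a b k i = 0
      · simp [h0]
      · refine Submodule.smul_mem _ _ (Submodule.mem_iSup_of_mem _
          (Submodule.mem_iSup_of_mem h0 ?_))
        rw [Module.End.mem_eigenspace_iff, psiOp_divPow_opF hba hd hv hE]
  have h2 : psiOp K n b k z ∈ (psiOp K n b k).eigenspace 0 := by
    rw [Module.End.mem_eigenspace_iff, h, zero_smul]
  exact Submodule.disjoint_def.1 ((psiOp K n b k).eigenspaces_iSupIndep 0) _ h2 h1

end Decomposition

section Quotient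

set_option linter.unusedSectionVars false

variable {K : Type} [Field K] [CharZero K] {n : ℕ}
variable {mf : ∀ p q : ℕ, Lam K n p ⊗[K] Lam K n q →ₗ[K] Lam K n (p + q)}
variable {Df : ∀ p q : ℕ, Lam K n (p + q) →ₗ[K] Lam K n p ⊗[K] Lam K n q}

lemma ιMulti_ne_zero_of_linearIndependent {M : Type} [AddCommGroup M] [Module K M] {p : ℕ}
    {v : Fin p → M} (hv : LinearIndependent K v) : ExteriorAlgebra.ιMulti K p v ≠ 0 := by
  have h := (exteriorPower.ιMulti_family_linearIndependent_field (n := p) hv).ne_zero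
    (Set.powersetCard.ofFinEmbEquiv (RelEmbedding.refl (α := Fin p) (· ≤ ·)))
  rw [exteriorPower.ιMulti_family, Equiv.symm_apply_apply] at h
  exact fun h0 => h (Subtype.ext h0)

lemma exists_highest_weight_vector {p q : ℕ} (hqp : q ≤ p) (hpn : p ≤ n) :
    ∃ v ∈ biDeg K n p q, v ≠ 0 ∧ opE K n v = 0 := by
  let u (m : ℕ) (hm : m ≤ n) (i : Fin m) : V K n := Pi.basisFun K (Fin n) (Fin.castLE hm i)
  have hu (m : ℕ) (hm : m ≤ n) : LinearIndependent K (u m hm) :=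
    (Pi.basisFun K (Fin n)).linearIndependent.comp _ (Fin.castLE_injective hm)
  refine ⟨_, jMap_mem_biDeg (wedge K n (u p hpn) ⊗ₜ wedge K n (u q (hqp.trans hpn))), ?_, ?_⟩
  · rw [jMap_wedge]
    refine ιMulti_ne_zero_of_linearIndependent ?_
    have h := (linearIndependent_inl_union_inr' (hu p hpn) (hu q (hqp.trans hpn))).comp _
      finSumFinEquiv.symm.injective
    have hc : (Fin.append (fun i => (u p hpn i, (0 : V K n)))
        fun i => ((0 : V K n), u q (hqp.trans hpn) i)) =
        Sum.elim (LinearMap.inl K _ _ ∘ u p hpn) (LinearMap.inr K _ _ ∘ u q (hqp.trans hpn)) ∘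
          finSumFinEquiv.symm := by
      funext i
      induction i using Fin.addCases <;> simp
    rw [hc]
    exact h
  · rw [jMap_tmul, opE_inlAlg_mul, wedge_coe, wedge_coe, ExteriorAlgebra.map_apply_ιMulti,
      ExteriorAlgebra.map_apply_ιMulti, expCoeff_ιMulti, Finset.mul_sum]
    refine Finset.sum_eq_zero fun s hs => ?_
    obtain ⟨i, hi⟩ : sᶜ.Nonempty := by
      rw [← Finset.card_pos]; simp at hs; omega
    rw [ExteriorAlgebra.ιMulti_mul_ιMulti]
    refine ExteriorAlgebra.ιMulti_eq_zero_of_not_inj fun hinj => ?_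
    have h : Fin.castAdd q (Fin.castLE hqp i) = Fin.natAdd p i := by
      refine hinj ?_
      rw [Fin.append_left, Fin.append_right, Finset.piecewise_eq_of_notMem _ _ _
        (Finset.mem_compl.1 hi)]
      simp [raiseMap, u]
    have := congrArg Fin.val h
    simp at this
    omega

lemma range_psiSmall_le_schurRel (hmf : ∀ p q, IsMulMap K n p q (mf p q))
    (hDf : ∀ p q, IsComulMap K n p q (Df p q)) {a b k : ℕ} (hka : k ≤ a) (hkb : k ≤ b)
    (hb : 1 ≤ b) :
    LinearMap.range (psiSmall K n mf Df a b k hka hkb) ≤ schurRel K n mf Df a b := by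
  rw [schurRel, dif_pos hb]
  rintro _ ⟨z, rfl⟩
  obtain ⟨_, ⟨y, rfl⟩, hy⟩ := psiOp_mem_map_opF hDf k (jMap_mem_biDeg z)
  refine ⟨y, jMap_injective a b ?_⟩
  rw [jMap_theta1 hmf hDf, jMap_psiSmall hmf hDf, hy]

lemma schurRel_le_range_psiSmall (hmf : ∀ p q, IsMulMap K n p q (mf p q))
    (hDf : ∀ p q, IsComulMap K n p q (Df p q)) {a b k : ℕ} (hba : b ≤ a) (hka : k ≤ a)
    (hkb : k ≤ b) (hb : 1 ≤ b) (h : ∀ j, 1 ≤ j → j ≤ b → psiEigenvalue K a b k j ≠ 0) :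
    schurRel K n mf Df a b ≤ LinearMap.range (psiSmall K n mf Df a b k hka hkb) := by
  rw [schurRel, dif_pos hb]
  rintro _ ⟨y, rfl⟩
  obtain ⟨_, ⟨z, rfl⟩, hz⟩ := exists_psiOp_eq_opF hDf hba hb h (jMap_mem_biDeg y)
  refine ⟨z, jMap_injective a b ?_⟩
  rw [jMap_theta1 hmf hDf, jMap_psiSmall hmf hDf, hz]

lemma psiEigenvalue_ne_zero_of_schurRel_le (hmf : ∀ p q, IsMulMap K n p q (mf p q))
    (hDf : ∀ p q, IsComulMap K n p q (Df p q)) {a b k : ℕ} (hba : b ≤ a) (hn : a + b ≤ n)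
    (hka : k ≤ a) (hkb : k ≤ b)
    (h : schurRel K n mf Df a b ≤ LinearMap.range (psiSmall K n mf Df a b k hka hkb))
    (j : ℕ) (hj : 1 ≤ j) (hjb : j ≤ b) : psiEigenvalue K a b k j ≠ 0 := by
  intro h0
  obtain ⟨i, rfl⟩ : ∃ i, j = i + 1 := ⟨j - 1, by omega⟩
  obtain ⟨d, rfl⟩ : ∃ d, b = d + (i + 1) := ⟨b - (i + 1), by omega⟩
  obtain ⟨v, hv, hv0, hE⟩ := exists_highest_weight_vector (K := K) (n := n)
    (p := a + (i + 1)) (q := d) (by omega) (by omega)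
  have hψ := psiOp_divPow_opF (k := k) hba rfl hv hE
  rw [h0, zero_smul] at hψ
  obtain ⟨y, hy⟩ : divPow (opF K n) i v ∈ biDeg K n (a + 1) (d + i) :=
    divPow_opF_mem_biDeg hDf i (by rwa [add_assoc, add_comm 1 i])
  have hmem : theta1 K n mf Df a (d + (i + 1)) (by omega) (((i : K) + 1)⁻¹ • y) ∈
      LinearMap.range (psiSmall K n mf Df a (d + (i + 1)) k hka hkb) := by
    refine h ?_
    rw [schurRel, dif_pos (by omega)]
    exact ⟨_, rfl⟩
  obtain ⟨z, hz⟩ := hmem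
  have hz' : psiOp K n (d + (i + 1)) k (jMap a _ z) = divPow (opF K n) (i + 1) v := by
    rw [← jMap_psiSmall hmf hDf hka hkb, hz, jMap_theta1 hmf hDf, divPow_succ,
      LinearMap.smul_apply, Module.End.mul_apply, ← hy, map_smul, map_smul]
    rfl
  have hF : divPow (opF K n) (i + 1) v = 0 := by
    rw [← hz']
    refine psiOp_eq_zero_of_psiOp_psiOp_eq_zero hDf hba (jMap_mem_biDeg z) ?_
    rw [hz', hψ]
  have hv' : opH K n v = ((a + (i + 1) - d : ℕ) : K) • v := by
    rw [opH_of_mem_biDeg hv, Nat.cast_sub (by omega)]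
  have h1 := (sl2Relations_op K n).divPow_e_divPow_f hv' hE (i + 1) 0 (by omega)
  rw [add_zero, hF, map_zero, divPow_zero, Module.End.one_apply, eq_comm, smul_eq_zero] at h1
  refine h1.elim (fun h2 => ?_) hv0
  exact (Nat.choose_pos (by omega)).ne' (Nat.cast_eq_zero.1 h2)

lemma coe_rho {rho : ∀ p : ℕ, GLn K n → (Lam K n p →ₗ[K] Lam K n p)}
    (hrho : IsExtAction K n rho) (p : ℕ) (g : GLn K n) (x : Lam K n p) :
    (rho p g x : ExteriorAlgebra K (V K n)) =
      ExteriorAlgebra.map (Matrix.toLin' (g : Matrix (Fin n) (Fin n) K)) x.1 := by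
  induction x using lam_induction with
  | hadd x y hx hy => simp [hx, hy]
  | hsmul c x hx => simp [hx]
  | hw v => rw [hrho, wedge_coe, wedge_coe, ExteriorAlgebra.map_apply_ιMulti]; rfl

lemma jMap_rhoT {rho : ∀ p : ℕ, GLn K n → (Lam K n p →ₗ[K] Lam K n p)}
    (hrho : IsExtAction K n rho) {a b : ℕ} (g : GLn K n) (z : Lam K n a ⊗[K] Lam K n b) :
    jMap a b (rhoT K n rho a b g z) =
      ExteriorAlgebra.map ((Matrix.toLin' (g : Matrix (Fin n) (Fin n) K)).prodMap
        (Matrix.toLin' (g : Matrix (Fin n) (Fin n) K))) (jMap a b z) := by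
  induction z using TensorProduct.induction_on with
  | zero => simp
  | add x y hx hy => simp only [map_add, hx, hy]
  | tmul x y =>
    have hl (f : V K n →ₗ[K] V K n) :
        f.prodMap f ∘ₗ LinearMap.inl K _ _ = LinearMap.inl K _ _ ∘ₗ f := by ext <;> simp
    have hr (f : V K n →ₗ[K] V K n) :
        f.prodMap f ∘ₗ LinearMap.inr K _ _ = LinearMap.inr K _ _ ∘ₗ f := by ext <;> simp
    rw [rhoT, TensorProduct.map_tmul, jMap_tmul, jMap_tmul, coe_rho hrho, coe_rho hrho, map_mul]
    simp only [← AlgHom.comp_apply, ExteriorAlgebra.map_comp_map, hl, hr]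

lemma rhoT_mem_schurRel (hmf : ∀ p q, IsMulMap K n p q (mf p q))
    (hDf : ∀ p q, IsComulMap K n p q (Df p q))
    {rho : ∀ p : ℕ, GLn K n → (Lam K n p →ₗ[K] Lam K n p)} (hrho : IsExtAction K n rho)
    {a b : ℕ} (hb : 1 ≤ b) (g : GLn K n) {z : Lam K n a ⊗[K] Lam K n b}
    (hz : z ∈ schurRel K n mf Df a b) :
    rhoT K n rho a b g z ∈ schurRel K n mf Df a b := by
  rw [schurRel, dif_pos hb] at hz ⊢
  obtain ⟨y, rfl⟩ := hz
  refine ⟨rhoT K n rho (a + 1) (b - 1) g y, jMap_injective a b ?_⟩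
  rw [jMap_rhoT hrho, jMap_theta1 hmf hDf, jMap_theta1 hmf hDf, jMap_rhoT hrho]
  exact extDer_map _ _ _ (fun m => by simp [lowerMap]) _

end Quotient

lemma isQuotIso_iff_eq {K : Type} [Field K] {G M : Type} [AddCommGroup M] [Module K M]
    [FiniteDimensional K M] {N₁ N₂ : Submodule K M} (hle : N₁ ≤ N₂) (ρ : G → M →ₗ[K] M)
    (hρ : ∀ g, ∀ z ∈ N₂, ρ g z ∈ N₂) : IsQuotIso K N₁ N₂ ρ ρ ↔ N₁ = N₂ := by
  constructor
  · rintro ⟨e, -⟩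
    refine Submodule.eq_of_le_of_finrank_eq hle ?_
    have h1 := N₁.finrank_quotient_add_finrank
    have h2 := N₂.finrank_quotient_add_finrank
    have h3 := e.finrank_eq
    omega
  · rintro rfl
    refine ⟨LinearEquiv.refl K _, fun g x y h => ?_⟩
    rw [LinearEquiv.refl_apply, Submodule.Quotient.eq] at h ⊢
    rw [← map_sub]
    exact hρ g _ h

/-- Corollary 4.4 of the paper: for `a ≥ b ≥ k ≥ 1` and `n ≥ a+b`,
`coker(ψ_k) ≅ L_{(a,b)}` as `G`-modules iff
`Σ_{t=1}^{j} (−1)^{t−1} C(b−t,b−k) C(j,t) C(a−b+j+t,t) ≠ 0` for all `j = 1, …, b`. -/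
theorem statement8 (K : Type) [Field K] [CharZero K] (n : ℕ)
    (a b k : ℕ) (hba : b ≤ a) (hk1 : 1 ≤ k) (hkb : k ≤ b) (hn : a + b ≤ n)
    (mf : ∀ p q : ℕ, Lam K n p ⊗[K] Lam K n q →ₗ[K] Lam K n (p+q))
    (Df : ∀ p q : ℕ, Lam K n (p+q) →ₗ[K] Lam K n p ⊗[K] Lam K n q)
    (hmf : ∀ p q, IsMulMap K n p q (mf p q))
    (hDf : ∀ p q, IsComulMap K n p q (Df p q))
    (rho : ∀ p : ℕ, GLn K n → (Lam K n p →ₗ[K] Lam K n p))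
    (hrho : IsExtAction K n rho) :
    IsQuotIso K
        (LinearMap.range (psiSmall K n mf Df a b k (hkb.trans hba) hkb))
        (schurRel K n mf Df a b)
        (rhoT K n rho a b) (rhoT K n rho a b) ↔
      ∀ j : ℕ, 1 ≤ j → j ≤ b →
        (∑ t ∈ Finset.Icc 1 j,
          (-1:K)^(t-1) * ((b-t).choose (b-k) : K) * (j.choose t : K) *
            ((a-b+j+t).choose t : K)) ≠ 0 := by
  have hb : 1 ≤ b := hk1.trans hkb
  have hle := range_psiSmall_le_schurRel hmf hDf (hkb.trans hba) hkb hb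
  have : ∀ p, FiniteDimensional K (Lam K n p) := fun p => inferInstance
  rw [isQuotIso_iff_eq hle _ fun g z hz => rhoT_mem_schurRel hmf hDf hrho hb g hz]
  constructor
  · intro h
    exact psiEigenvalue_ne_zero_of_schurRel_le hmf hDf hba hn _ hkb h.ge
  · intro h
    exact le_antisymm hle (schurRel_le_range_psiSmall hmf hDf hba _ hkb hb h)

end MMS
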